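/- Fix x ∈ ℂ, θ ∈ [−π/8, π/8] and N ∈ ℕ. For y ∈ ℂ with Re y > 0 and k ∈ {1,2}, define E_k(x,y) := √(π/3)·2^{−5/6}·y^{−1/3}·exp( 3·4^{−4/3}·e^{−(−1)^k·2iπ/3}·y^{4/3} − 4^{−2/3}·x·y^{2/3}·e^{−(−1)^k·iπ/3} + x²/6 ) and S_{k,N}(x,y) := ∑_{n=0}^{N} e^{(−1)^k·(2n+1)·iπ/6} · A_n(x) · y^{−2n/3}, with principal-branch powers of y. Then, as r → ∞ along the positive reals, with y := r e^{iθ}: P(x,y) − E_1(x,y)·S_{1,N}(x,y) − E_2(x,y)·S_{2,N}(x,y) = O( (|E_1(x,y)| + |E_2(x,y)|) · r^{−2(N+1)/3} ). -/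

import Mathlib

open Real MeasureTheory Filter Asymptotics

/-- The Pearcey-type integral `P(x,y) = ∫₀^∞ exp(−t⁴ − x t²)·cos(y t) dt`. -/
noncomputable def P (x y : ℂ) : ℂ :=
  ∫ t in Set.Ioi (0 : ℝ), Complex.exp (-(t : ℂ) ^ 4 - x * (t : ℂ) ^ 2) * Complex.cos (y * t)

/-- The coefficients `a_{n,m,k}(x)`. -/
noncomputable def a (x : ℂ) (n m k : ℕ) : ℂ :=
  (-1) ^ m * x ^ k * (2 : ℂ) ^ ((4 * ((2 * m - n - k : ℕ) : ℂ)) / 3) /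
    ((k.factorial : ℂ) * ((2 * m - n - k).factorial : ℂ) * ((n - m).factorial : ℂ))

/-- The coefficients `c_n(x)`. -/
noncomputable def c (x : ℂ) (n : ℕ) : ℂ :=
  ∑ k ∈ Finset.range (n / 2 + 1),
    x ^ (n - 2 * k) *
      ((((3 : ℝ) ^ ((k : ℤ) - (n : ℤ)) * (2 : ℝ) ^ (-(n : ℝ) / 3 - (k : ℝ)) *
          (n.factorial : ℝ) / ((k.factorial : ℝ) * ((n - 2 * k).factorial : ℝ))) : ℝ) : ℂ)

/-- The coefficients `A_n(x)`. -/
noncomputable def A (x : ℂ) (n : ℕ) : ℂ :=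
  ∑ m ∈ Finset.Icc ((n + 1) / 2) n, ∑ k ∈ Finset.range (2 * m - n + 1),
    (-1) ^ (n + k) * a x n m k * c x (2 * m + n - k)

/-- `E_k(x,y) = √(π/3)·2^{−5/6}·y^{−1/3}·exp(3·4^{−4/3}·e^{−(−1)^k·2iπ/3}·y^{4/3}
− 4^{−2/3}·x·y^{2/3}·e^{−(−1)^k·iπ/3} + x²/6)` (principal powers of `y`). -/
noncomputable def E (x y : ℂ) (k : ℕ) : ℂ :=
  ((Real.sqrt (π / 3) : ℝ) : ℂ) * (((2 : ℝ) ^ (-(5 : ℝ) / 6) : ℝ) : ℂ) * y ^ (-(1 : ℂ) / 3) *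
    Complex.exp (3 * (4 : ℂ) ^ (-(4 : ℂ) / 3) *
        Complex.exp (-(-1 : ℂ) ^ k * 2 * (π : ℂ) * Complex.I / 3) * y ^ ((4 : ℂ) / 3)
      - (4 : ℂ) ^ (-(2 : ℂ) / 3) * x * y ^ ((2 : ℂ) / 3) *
        Complex.exp (-(-1 : ℂ) ^ k * (π : ℂ) * Complex.I / 3)
      + x ^ 2 / 6)

/-- `S_{k,N}(x,y) = ∑_{n=0}^{N} e^{(−1)^k (2n+1) iπ/6} A_n(x) y^{−2n/3}`. -/
noncomputable def S (x y : ℂ) (k N : ℕ) : ℂ :=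
  ∑ n ∈ Finset.range (N + 1),
    Complex.exp ((-1 : ℂ) ^ k * (2 * (n : ℂ) + 1) * (π : ℂ) * Complex.I / 6) * A x n *
      y ^ (-(2 * (n : ℂ)) / 3)

lemma exp_rem (n : ℕ) : ∀ z : ℂ,
    ‖Complex.exp z - ∑ m ∈ Finset.range n, z ^ m / (m.factorial : ℂ)‖
      ≤ ‖z‖ ^ n * (1 + Real.exp z.re) := by
  have key : ∀ z : ℂ, ‖Complex.exp z - ∑ m ∈ Finset.range n, z ^ m / (m.factorial : ℂ)‖
      ≤ ‖z‖ ^ n * Real.exp (max 0 z.re) := by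
    induction n with
    | zero => intro z; simp [Complex.norm_exp]
    | succ n ih =>
      intro z
      set s : Set ℂ := {w | ‖w‖ ≤ ‖z‖} ∩ {w | w.re ≤ max 0 z.re} with hs
      have hconv : Convex ℝ s := by
        apply Convex.inter
        · have := convex_closedBall (0 : ℂ) ‖z‖
          have e : {w : ℂ | ‖w‖ ≤ ‖z‖} = Metric.closedBall (0 : ℂ) ‖z‖ := by ext w; simp
          rw [e]; exact this
        · exact convex_halfSpace_re_le _
      have hd : ∀ w ∈ s, HasDerivWithinAt
          (fun w : ℂ => Complex.exp w - ∑ m ∈ Finset.range (n + 1), w ^ m / (m.factorial : ℂ))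
          (Complex.exp w - ∑ m ∈ Finset.range n, w ^ m / (m.factorial : ℂ)) s w := by
        intro w _
        apply HasDerivAt.hasDerivWithinAt
        apply (Complex.hasDerivAt_exp w).sub
        simp_rw [Finset.sum_range_succ']
        simp only [pow_zero, Nat.factorial_zero]
        apply HasDerivAt.add_const
        apply HasDerivAt.fun_sum
        intro m _
        have := (hasDerivAt_pow (m + 1) w).div_const (((m + 1).factorial : ℕ) : ℂ)
        refine this.congr_deriv ?_
        rw [Nat.factorial_succ]
        push_cast
        have h1 : ((m : ℂ) + 1) ≠ 0 := by exact_mod_cast Nat.succ_ne_zero m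
        have h2 : (m.factorial : ℂ) ≠ 0 := by exact_mod_cast m.factorial_ne_zero
        field_simp
      have hb : ∀ w ∈ s, ‖Complex.exp w - ∑ m ∈ Finset.range n, w ^ m / (m.factorial : ℂ)‖
          ≤ ‖z‖ ^ n * Real.exp (max 0 z.re) := by
        rintro w ⟨h1, h2⟩
        refine (ih w).trans ?_
        have h1' : ‖w‖ ≤ ‖z‖ := h1
        have h2' : w.re ≤ max 0 z.re := h2
        have h3 : max 0 w.re ≤ max 0 z.re := max_le (le_max_left _ _) h2'
        gcongr
      have := hconv.norm_image_sub_le_of_norm_hasDerivWithin_le hd hb (x := 0) (y := z)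
        ⟨by simp, by simp⟩ ⟨by simp, by simp⟩
      simp only [sub_zero, Finset.sum_range_succ' _ n] at this
      simp only [Finset.sum_range_succ' _ n]
      simp at this ⊢
      refine this.trans (le_of_eq ?_)
      ring
  intro z
  refine (key z).trans ?_
  gcongr
  rcases max_cases 0 z.re with ⟨h, _⟩ | ⟨h, _⟩ <;> rw [h]
  · simp; positivity
  · simp

lemma shift_contour (f : ℂ → ℂ) (hf : Differentiable ℂ f) (h K : ℝ)
    (hb : ∀ u v : ℝ, |v| ≤ |h| → ‖f (u + v * Complex.I)‖ ≤ K * Real.exp (-u ^ 2)) :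
    ∫ u : ℝ, f u = ∫ u : ℝ, f (u + h * Complex.I) := by
  have hint : ∀ v : ℝ, |v| ≤ |h| → Integrable (fun u : ℝ => f (u + v * Complex.I)) := by
    intro v hv
    have hg : Integrable (fun u : ℝ => K * Real.exp (-u ^ 2)) := by
      have := (integrable_exp_neg_mul_sq (b := 1) one_pos).const_mul K
      simpa using this
    refine hg.mono' ?_ (ae_of_all _ fun u => hb u v hv)
    exact (hf.continuous.comp (by fun_prop)).aestronglyMeasurable
  have i0 : Integrable (fun u : ℝ => f u) := by simpa using hint 0 (by simp)
  have i1 := hint h le_rfl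
  have t0 := intervalIntegral_tendsto_integral i0 tendsto_neg_atTop_atBot tendsto_id
  have t1 := intervalIntegral_tendsto_integral i1 tendsto_neg_atTop_atBot tendsto_id
  have hdiff := t0.sub t1
  have hz : Tendsto (fun T : ℝ => (∫ u in (-T)..T, f u) - ∫ u in (-T)..T, f (u + h * Complex.I))
      atTop (nhds 0) := by
    have hC : ∀ T : ℝ, ((∫ u in (-T)..T, f u) - ∫ u in (-T)..T, f (u + h * Complex.I))
        = Complex.I * (∫ v in (0:ℝ)..h, f (-T + v * Complex.I))
          - Complex.I * (∫ v in (0:ℝ)..h, f (T + v * Complex.I)) := by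
      intro T
      have := Complex.integral_boundary_rect_eq_zero_of_differentiableOn f (-T)
        (T + h * Complex.I) hf.differentiableOn
      simp only [Complex.neg_im, Complex.ofReal_im, neg_zero, Complex.ofReal_zero, zero_mul,
        add_zero, Complex.neg_re, Complex.ofReal_re, Complex.add_re, Complex.mul_re,
        Complex.I_re, mul_zero, Complex.I_im, tsub_zero, Complex.add_im, Complex.mul_im,
        mul_one, zero_add, smul_eq_mul, Complex.ofReal_neg] at this
      linear_combination this
    have hv : ∀ T : ℝ, ‖(∫ v in (0:ℝ)..h, f (T + v * Complex.I))‖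
        ≤ K * Real.exp (-T ^ 2) * |h - 0| := by
      intro T
      apply intervalIntegral.norm_integral_le_of_norm_le_const
      intro v hv
      apply hb
      have := Set.abs_sub_left_of_mem_uIcc (Set.uIoc_subset_uIcc hv)
      simpa using this
    refine squeeze_zero_norm (a := fun T : ℝ => 2 * (K * Real.exp (-T ^ 2) * |h - 0|)) ?_ ?_
    · intro T
      rw [hC]
      refine (norm_sub_le _ _).trans ?_
      have h1 := hv T
      have h2 := hv (-T)
      simp only [norm_mul, Complex.norm_I, one_mul]
      simp only [Complex.ofReal_neg, even_two, Even.neg_pow] at h2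
      linarith
    · have : Tendsto (fun T : ℝ => Real.exp (-T ^ 2)) atTop (nhds 0) := by
        apply Real.tendsto_exp_atBot.comp
        apply tendsto_neg_atTop_atBot.comp
        exact tendsto_pow_atTop two_ne_zero
      simpa using ((this.const_mul K).mul_const |h - 0|).const_mul 2
  have := tendsto_nhds_unique hdiff hz
  exact sub_eq_zero.mp this

/-- Pointwise absorption. -/
lemma absorb {κ L : ℝ} (hκ : 0 < κ) (p : ℝ) :
    -κ * p ^ 2 + L * |p| ≤ L ^ 2 / (2 * κ) + -(κ / 2) * p ^ 2 := by
  have h : L ^ 2 / (2 * κ) - L * |p| + κ / 2 * p ^ 2 = (κ * |p| - L) ^ 2 / (2 * κ) := by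
    rw [← sq_abs p]; field_simp; ring
  have : 0 ≤ (κ * |p| - L) ^ 2 / (2 * κ) := by positivity
  linarith

lemma integrable_gauss_abs {κ : ℝ} (L : ℝ) (hκ : 0 < κ) :
    Integrable (fun p : ℝ => Real.exp (-κ * p ^ 2 + L * |p|)) := by
  have hg := (integrable_exp_neg_mul_sq (b := κ / 2) (by positivity)).const_mul
    (Real.exp (L ^ 2 / (2 * κ)))
  refine hg.mono' (by fun_prop) (ae_of_all _ fun p => ?_)
  rw [Real.norm_eq_abs, abs_of_pos (Real.exp_pos _), ← Real.exp_add]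
  exact Real.exp_le_exp.mpr (absorb hκ p)

/-- moments -/
noncomputable def Mom (x : ℂ) (q : ℕ) : ℂ :=
  ∑ k ∈ Finset.range (q / 2 + 1),
    (q.factorial : ℂ) / ((k.factorial : ℂ) * ((q - 2 * k).factorial : ℂ)) *
      (-x / 6) ^ (q - 2 * k) * (1 / 24) ^ k

noncomputable def MomT (x : ℂ) (q k : ℕ) : ℂ :=
  if 2 * k ≤ q then (q.factorial : ℂ) / ((k.factorial : ℂ) * ((q - 2 * k).factorial : ℂ)) *
      (-x / 6) ^ (q - 2 * k) * (1 / 24) ^ k else 0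

lemma Mom_eq (x : ℂ) (q L : ℕ) (hL : q / 2 + 1 ≤ L) : Mom x q = ∑ k ∈ Finset.range L, MomT x q k := by
  unfold Mom
  rw [← Finset.sum_subset (Finset.range_subset_range.mpr hL)]
  · apply Finset.sum_congr rfl
    intro k hk
    rw [Finset.mem_range] at hk
    rw [MomT, if_pos (by omega)]
  · intro k _ hk
    rw [Finset.mem_range] at hk
    rw [MomT, if_neg (by omega)]

lemma Mom_rec (x : ℂ) (q : ℕ) :
    Mom x (q + 2) = (-x / 6) * Mom x (q + 1) + (q + 1) / 12 * Mom x q := by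
  rw [Mom_eq x (q + 2) (q + 3) (by omega), Mom_eq x (q + 1) (q + 3) (by omega),
    Mom_eq x q (q + 2) (by omega), Finset.sum_range_succ' _ (q + 2), Finset.sum_range_succ' _ (q + 2)]
  have h0 : MomT x (q + 2) 0 = (-x / 6) * MomT x (q + 1) 0 := by
    have h1 : ((q + 2).factorial : ℂ) ≠ 0 := by exact_mod_cast (Nat.factorial_ne_zero _)
    have h2 : ((q + 1).factorial : ℂ) ≠ 0 := by exact_mod_cast (Nat.factorial_ne_zero _)
    simp [MomT, h1, h2]
    ring
  have hs : ∀ k, MomT x (q + 2) (k + 1) = (-x / 6) * MomT x (q + 1) (k + 1)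
      + (q + 1) / 12 * MomT x q k := by
    intro k
    unfold MomT
    have hk1 : (k.factorial : ℂ) ≠ 0 := by exact_mod_cast (Nat.factorial_ne_zero _)
    have hk2 : (k : ℂ) + 1 ≠ 0 := by exact_mod_cast Nat.succ_ne_zero k
    rcases lt_trichotomy (2 * k) q with h | h | h
    · obtain ⟨d, rfl⟩ : ∃ d, q = 2 * k + 1 + d := ⟨q - (2 * k + 1), by omega⟩
      rw [if_pos (by omega), if_pos (by omega), if_pos (by omega)]
      have e1 : 2 * k + 1 + d + 2 - 2 * (k + 1) = d + 1 := by omega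
      have e2 : 2 * k + 1 + d + 1 - 2 * (k + 1) = d := by omega
      have e3 : 2 * k + 1 + d - 2 * k = d + 1 := by omega
      rw [e1, e2, e3, Nat.factorial_succ (2 * k + 1 + d + 1), Nat.factorial_succ (2 * k + 1 + d),
        Nat.factorial_succ d, Nat.factorial_succ k]
      have hd1 : (d.factorial : ℂ) ≠ 0 := by exact_mod_cast (Nat.factorial_ne_zero _)
      have hd2 : (d : ℂ) + 1 ≠ 0 := by exact_mod_cast Nat.succ_ne_zero d
      push_cast
      field_simp
      ring
    · subst h
      rw [if_pos (by omega), if_neg (by omega), if_pos (by omega)]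
      have e1 : 2 * k + 2 - 2 * (k + 1) = 0 := by omega
      have e3 : 2 * k - 2 * k = 0 := by omega
      rw [e1, e3, Nat.factorial_succ (2 * k + 1), Nat.factorial_succ (2 * k), Nat.factorial_succ k]
      push_cast
      simp
      field_simp
      ring
    · rw [if_neg (by omega), if_neg (by omega), if_neg (by omega)]
      simp
  simp only [hs, h0, Finset.sum_add_distrib, mul_add, Finset.mul_sum]
  ring

noncomputable def GG (x u : ℂ) : ℂ := Complex.exp (-6 * u ^ 2 - 2 * x * u)
noncomputable def ZZ (x ε u : ℂ) : ℂ := -(ε * (4 * u ^ 3 + x * u ^ 2) + ε ^ 2 * u ^ 4)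
noncomputable def TT (x u : ℂ) (m j : ℕ) : ℂ :=
  (-1) ^ m / (((m - j).factorial : ℂ) * (j.factorial : ℂ)) *
    (4 * u ^ 3 + x * u ^ 2) ^ (m - j) * u ^ (4 * j)
noncomputable def PP (x ε u : ℂ) (N : ℕ) : ℂ :=
  ∑ m ∈ Finset.range (N + 1), ∑ j ∈ Finset.range (m + 1),
    if m + j ≤ N then ε ^ (m + j) * TT x u m j else 0
noncomputable def QQ (x : ℂ) : ℝ := 48 + 2 * ‖x‖
noncomputable def VV (x : ℂ) (p : ℝ) : ℝ := QQ x * Real.exp |p|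

lemma abs_pow_le (p : ℝ) (q : ℕ) : |p| ^ q ≤ q.factorial * Real.exp |p| := by
  have := Real.pow_div_factorial_le_exp |p| (abs_nonneg p) q
  rwa [div_le_iff₀ (by positivity), mul_comm] at this

lemma one_le_VV (x : ℂ) (p : ℝ) : 1 ≤ VV x p := by
  unfold VV QQ
  have : 1 ≤ Real.exp |p| := Real.one_le_exp (abs_nonneg p)
  nlinarith [norm_nonneg x]

lemma GG_norm {x ω : ℂ} {κ : ℝ} (hω : ‖ω‖ = 1) (hκ : κ ≤ 6 * (ω ^ 2).re) (p : ℝ) :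
    ‖GG x (ω * p)‖ ≤ Real.exp (-κ * p ^ 2 + 2 * ‖x‖ * |p|) := by
  unfold GG
  rw [Complex.norm_exp]
  apply Real.exp_le_exp.mpr
  have h1 : (-6 * (ω * (p : ℂ)) ^ 2 - 2 * x * (ω * p)).re
      = -(6 * (ω ^ 2).re) * p ^ 2 + (-(2 * x * (ω * p))).re := by
    have : -6 * (ω * (p : ℂ)) ^ 2 = ((-6 * p ^ 2 : ℝ) : ℂ) * ω ^ 2 := by push_cast; ring
    rw [Complex.sub_re, this, Complex.re_ofReal_mul, Complex.neg_re]; ring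
  rw [h1]
  have h2 : (-(2 * x * (ω * p))).re ≤ 2 * ‖x‖ * |p| := by
    refine (Complex.re_le_norm _).trans (le_of_eq ?_)
    simp [hω]
  nlinarith [sq_nonneg p]

lemma GG_mom_integrable {x ω : ℂ} {κ : ℝ} (hω : ‖ω‖ = 1) (h0 : 0 < κ) (hκ : κ ≤ 6 * (ω ^ 2).re)
    (q : ℕ) : Integrable (fun p : ℝ => GG x (ω * p) * (ω * p) ^ q) := by
  refine ((integrable_gauss_abs (2 * ‖x‖ + 1) h0).const_mul (q.factorial : ℝ)).mono' ?_
    (ae_of_all _ fun p => ?_)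
  · apply Continuous.aestronglyMeasurable
    unfold GG; fun_prop
  · rw [norm_mul, norm_pow, norm_mul, hω, one_mul, Complex.norm_real, Real.norm_eq_abs]
    have e : -κ * p ^ 2 + (2 * ‖x‖ + 1) * |p| = (-κ * p ^ 2 + 2 * ‖x‖ * |p|) + |p| := by ring
    rw [e, Real.exp_add]
    calc _ ≤ Real.exp (-κ * p ^ 2 + 2 * ‖x‖ * |p|) * (q.factorial * Real.exp |p|) := by
          gcongr
          · exact GG_norm hω hκ p
          · exact abs_pow_le p q
      _ = _ := by ring

lemma GG_mom_zero {x ω : ℂ} (hω : ‖ω‖ = 1) (hre : 0 < ω.re) (h2 : 0 < (ω ^ 2).re) :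
    ∫ p : ℝ, GG x (ω * p) = (Real.sqrt (π / 6) : ℝ) * Complex.exp (x ^ 2 / 6) / ω := by
  have hω0 : ω ≠ 0 := by rintro rfl; simp at hω
  have hb : ((-6 : ℂ) * ω ^ 2).re < 0 := by
    have : ((-6 : ℂ) * ω ^ 2).re = -6 * (ω ^ 2).re := by
      have : (-6 : ℂ) = ((-6 : ℝ) : ℂ) := by push_cast; ring
      rw [this, Complex.re_ofReal_mul]
    rw [this]; linarith
  have := integral_cexp_quadratic hb (-2 * x * ω) 0
  have e : ∀ p : ℝ, GG x (ω * p) = Complex.exp (-6 * ω ^ 2 * p ^ 2 + -2 * x * ω * p + 0) := by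
    intro p; unfold GG; congr 1; ring
  simp_rw [e]
  rw [this]
  have e2 : (0 : ℂ) - (-2 * x * ω) ^ 2 / (4 * (-6 * ω ^ 2)) = x ^ 2 / 6 := by
    field_simp; ring
  rw [e2]
  have e3 : ((π : ℂ) / -(-6 * ω ^ 2)) ^ (1 / 2 : ℂ) = (Real.sqrt (π / 6) : ℝ) / ω := by
    have hw : (π : ℂ) / -(-6 * ω ^ 2) = ((Real.sqrt (π / 6) : ℝ) / ω) ^ 2 := by
      rw [div_pow, ← Complex.ofReal_pow, Real.sq_sqrt (by positivity)]
      push_cast; field_simp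
    rw [hw]
    have hpi : 0 < Real.sqrt (π / 6) := by positivity
    have hr : 0 < (((Real.sqrt (π / 6) : ℝ) : ℂ) / ω).re := by
      rw [div_eq_mul_inv, Complex.re_ofReal_mul, Complex.inv_re]
      have : 0 < Complex.normSq ω := Complex.normSq_pos.mpr hω0
      positivity
    have ha := Complex.abs_arg_lt_pi_div_two_iff.mpr (Or.inl hr)
    rw [abs_lt] at ha
    have := Complex.pow_cpow_nat_inv (n := 2) (x := ((Real.sqrt (π / 6) : ℝ) : ℂ) / ω) two_ne_zero
      (by push_cast; linarith [ha.1]) (by push_cast; linarith [ha.2])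
    rw [one_div]; exact_mod_cast this
  rw [e3]; ring

lemma GG_deriv (x ω : ℂ) (q : ℕ) (p : ℝ) :
    HasDerivAt (fun p : ℝ => GG x (ω * p) * (ω * p) ^ q)
      (ω * (-12 * (GG x (ω * p) * (ω * p) ^ (q + 1)) - 2 * x * (GG x (ω * p) * (ω * p) ^ q)
        + q * (GG x (ω * p) * (ω * p) ^ (q - 1)))) p := by
  have h : HasDerivAt (fun u : ℂ => GG x (ω * u) * (ω * u) ^ q)
      (ω * (-12 * (GG x (ω * p) * (ω * p) ^ (q + 1)) - 2 * x * (GG x (ω * p) * (ω * p) ^ q)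
        + q * (GG x (ω * p) * (ω * p) ^ (q - 1)))) (p : ℂ) := by
    have h1 : HasDerivAt (fun u : ℂ => ω * u) ω (p : ℂ) := by
      simpa using (hasDerivAt_id (p : ℂ)).const_mul ω
    have h2 := (((h1.fun_pow 2).const_mul (-6)).sub (h1.const_mul (2 * x))).cexp
    have h3 := h2.mul (h1.fun_pow q)
    refine HasDerivAt.congr_deriv (f := fun u : ℂ => GG x (ω * u) * (ω * u) ^ q) h3 ?_
    unfold GG
    push_cast
    simp
    ring
  exact h.comp_ofReal

lemma GG_mom {x ω : ℂ} (hω : ‖ω‖ = 1) (hre : 0 < ω.re) (h2 : 0 < (ω ^ 2).re) (q : ℕ) :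
    ∫ p : ℝ, GG x (ω * p) * (ω * p) ^ q
      = (Real.sqrt (π / 6) : ℝ) * Complex.exp (x ^ 2 / 6) / ω * Mom x q := by
  have hω0 : ω ≠ 0 := by rintro rfl; simp at hω
  have hint := fun q => GG_mom_integrable (x := x) (ω := ω) (κ := 6 * (ω ^ 2).re) hω
    (by linarith) le_rfl q
  have hrec : ∀ q : ℕ, 12 * (∫ p : ℝ, GG x (ω * p) * (ω * p) ^ (q + 1))
      = -2 * x * (∫ p : ℝ, GG x (ω * p) * (ω * p) ^ q)
        + q * (∫ p : ℝ, GG x (ω * p) * (ω * p) ^ (q - 1)) := by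
    intro q
    have i1 := (hint (q + 1)).const_mul (-12)
    have i2 := (hint q).const_mul (2 * x)
    have i3 := (hint (q - 1)).const_mul (q : ℂ)
    have := integral_eq_zero_of_hasDerivAt_of_integrable (GG_deriv x ω q)
      (((i1.sub i2).add i3).const_mul ω) (hint q)
    rw [integral_const_mul, integral_add (by exact i1.sub i2) i3, integral_sub i1 i2,
      integral_const_mul, integral_const_mul, integral_const_mul] at this
    have := (mul_eq_zero.mp this).resolve_left hω0
    linear_combination -this
  have m0 : Mom x 0 = 1 := by simp [Mom]
  have m1 : Mom x 1 = -x / 6 := by simp [Mom]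
  induction q using Nat.twoStepInduction with
  | zero => simp [GG_mom_zero hω hre h2, m0]
  | one =>
    have := hrec 0
    simp [GG_mom_zero hω hre h2] at this ⊢
    rw [m1]
    linear_combination this / 12
  | more q ih1 ih2 =>
    have := hrec (q + 1)
    simp only [Nat.add_sub_cancel] at this
    rw [ih1, ih2] at this
    rw [Mom_rec]
    push_cast at this
    linear_combination this / 12

lemma ZZ_pow (x ε u : ℂ) (m : ℕ) :
    ZZ x ε u ^ m / (m.factorial : ℂ) = ∑ j ∈ Finset.range (m + 1), ε ^ (m + j) * TT x u m j := by
  unfold ZZ TT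
  rw [neg_pow, add_comm, add_pow, Finset.mul_sum, Finset.sum_div]
  apply Finset.sum_congr rfl
  intro j hj
  rw [Finset.mem_range] at hj
  obtain ⟨d, rfl⟩ : ∃ d, m = j + d := ⟨m - j, by omega⟩
  have e : j + d - j = d := by omega
  have hc := Nat.choose_mul_factorial_mul_factorial (show j ≤ j + d by omega)
  rw [e] at hc ⊢
  have hc' : (((j + d).choose j : ℕ) : ℂ) * (j.factorial : ℂ) * (d.factorial : ℂ)
    = ((j + d).factorial : ℂ) := by exact_mod_cast hc
  have h1 : (j.factorial : ℂ) ≠ 0 := by exact_mod_cast (Nat.factorial_ne_zero _)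
  have h2 : (d.factorial : ℂ) ≠ 0 := by exact_mod_cast (Nat.factorial_ne_zero _)
  have h3 : ((j + d).factorial : ℂ) ≠ 0 := by exact_mod_cast (Nat.factorial_ne_zero _)
  have : (((j + d).choose j : ℕ) : ℂ) = ((j + d).factorial : ℂ) / ((j.factorial : ℂ) * (d.factorial : ℂ)) := by
    rw [← hc']; field_simp
  rw [this]
  field_simp
  simp only [mul_pow]
  ring

lemma base_le (x : ℂ) (p : ℝ) : 4 * |p| ^ 3 + ‖x‖ * |p| ^ 2 + |p| ^ 4 ≤ VV x p := by
  have h3 := abs_pow_le p 3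
  have h2 := abs_pow_le p 2
  have h4 := abs_pow_le p 4
  norm_num [Nat.factorial] at h2 h3 h4
  unfold VV QQ
  have := mul_le_mul_of_nonneg_left h2 (norm_nonneg x)
  have h2' : ‖x‖ * |p| ^ 2 ≤ ‖x‖ * (2 * Real.exp |p|) := by simpa using this
  have h4' : |p| ^ 4 ≤ 24 * Real.exp |p| := by simpa using h4
  linarith

lemma TT_norm {x ω : ℂ} (hω : ‖ω‖ = 1) (p : ℝ) {m j N : ℕ} (hj : j ≤ m) (hm : m ≤ N) :
    ‖TT x (ω * p) m j‖ ≤ VV x p ^ N := by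
  have hu : ‖ω * (p : ℂ)‖ = |p| := by simp [hω]
  have hb := base_le x p
  have hp := abs_nonneg p
  have hx := norm_nonneg x
  have h1 : ‖4 * (ω * (p : ℂ)) ^ 3 + x * (ω * p) ^ 2‖ ≤ VV x p := by
    refine (norm_add_le _ _).trans ?_
    rw [norm_mul, norm_mul, norm_pow, norm_pow, hu]
    norm_num
    have : 0 ≤ |p| ^ 4 := by positivity
    have e : |p| ^ 2 = p ^ 2 := sq_abs p
    rw [e] at hb
    linarith
  have h2 : |p| ^ 4 ≤ VV x p := by
    have : 0 ≤ 4 * |p| ^ 3 + ‖x‖ * |p| ^ 2 := by positivity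
    linarith
  have hV := one_le_VV x p
  unfold TT
  rw [norm_mul, norm_mul, norm_pow, norm_pow, hu, pow_mul]
  have h3 : ‖(-1 : ℂ) ^ m / (((m - j).factorial : ℂ) * (j.factorial : ℂ))‖ ≤ 1 := by
    rw [norm_div, norm_pow, norm_neg, norm_one, one_pow, norm_mul, Complex.norm_natCast,
      Complex.norm_natCast]
    apply div_le_one_of_le₀ _ (by positivity)
    exact_mod_cast Nat.mul_pos (Nat.factorial_pos _) (Nat.factorial_pos _)
  calc _ ≤ 1 * VV x p ^ (m - j) * VV x p ^ j := by gcongr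
    _ = VV x p ^ m := by rw [one_mul, ← pow_add]; congr 1; omega
    _ ≤ _ := pow_le_pow_right₀ hV hm

lemma ZZ_norm {x ω ε : ℂ} (hω : ‖ω‖ = 1) {δ : ℝ} (h1 : δ ≤ 1) (hε : ‖ε‖ = δ) (p : ℝ) :
    ‖ZZ x ε (ω * p)‖ ≤ δ * VV x p := by
  have hu : ‖ω * (p : ℂ)‖ = |p| := by simp [hω]
  have hd : 0 ≤ δ := hε ▸ norm_nonneg _
  unfold ZZ
  rw [norm_neg]
  have h2 : ‖4 * (ω * (p : ℂ)) ^ 3 + x * (ω * p) ^ 2‖ ≤ 4 * |p| ^ 3 + ‖x‖ * |p| ^ 2 := by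
    refine (norm_add_le _ _).trans ?_
    rw [norm_mul, norm_mul, norm_pow, norm_pow, hu]
    norm_num
  calc _ ≤ δ * (4 * |p| ^ 3 + ‖x‖ * |p| ^ 2) + δ ^ 2 * |p| ^ 4 := by
        refine (norm_add_le _ _).trans ?_
        rw [norm_mul, norm_mul, norm_pow, norm_pow, hu, hε]
        gcongr
    _ ≤ δ * (4 * |p| ^ 3 + ‖x‖ * |p| ^ 2) + δ * |p| ^ 4 := by
        gcongr; nlinarith
    _ = δ * (4 * |p| ^ 3 + ‖x‖ * |p| ^ 2 + |p| ^ 4) := by ring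
    _ ≤ _ := by gcongr; exact base_le x p

lemma double_sum_le (N : ℕ) (f : ℕ → ℕ → ℂ) (B : ℝ) (hB : 0 ≤ B)
    (hf : ∀ m j, j ≤ m → m ≤ N → ‖f m j‖ ≤ B) :
    ‖∑ m ∈ Finset.range (N + 1), ∑ j ∈ Finset.range (m + 1), f m j‖ ≤ ((N : ℝ) + 1) ^ 2 * B := by
  calc _ ≤ ∑ m ∈ Finset.range (N + 1), ((N : ℝ) + 1) * B := by
        apply norm_sum_le_of_le
        intro m hm
        rw [Finset.mem_range] at hm
        calc _ ≤ ∑ j ∈ Finset.range (m + 1), B := by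
              apply norm_sum_le_of_le
              intro j hj
              rw [Finset.mem_range] at hj
              exact hf m j (by omega) (by omega)
          _ = ((m : ℝ) + 1) * B := by simp
          _ ≤ _ := by
              gcongr
              omega
    _ = _ := by simp; ring

lemma PP_norm {x ω ε : ℂ} (hω : ‖ω‖ = 1) {δ : ℝ} (h1 : δ ≤ 1) (hε : ‖ε‖ = δ) (p : ℝ) (N : ℕ) :
    ‖PP x ε (ω * p) N‖ ≤ ((N : ℝ) + 1) ^ 2 * VV x p ^ N := by
  have hd : 0 ≤ δ := hε ▸ norm_nonneg _
  have hV := one_le_VV x p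
  apply double_sum_le
  · positivity
  · intro m j hj hm
    split_ifs
    · rw [norm_mul, norm_pow, hε]
      have := TT_norm (x := x) hω p hj hm
      have h3 : δ ^ (m + j) ≤ 1 := pow_le_one₀ hd h1
      calc _ ≤ 1 * VV x p ^ N := by gcongr
        _ = _ := one_mul _
    · rw [norm_zero]; positivity

lemma PP_diff {x ω ε : ℂ} (hω : ‖ω‖ = 1) {δ : ℝ} (h1 : δ ≤ 1) (hε : ‖ε‖ = δ) (p : ℝ) (N : ℕ) :
    ‖∑ m ∈ Finset.range (N + 1), ZZ x ε (ω * p) ^ m / (m.factorial : ℂ) - PP x ε (ω * p) N‖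
      ≤ ((N : ℝ) + 1) ^ 2 * (δ ^ (N + 1) * VV x p ^ N) := by
  have hd : 0 ≤ δ := hε ▸ norm_nonneg _
  have hV := one_le_VV x p
  simp_rw [ZZ_pow]
  unfold PP
  simp_rw [← Finset.sum_sub_distrib]
  apply double_sum_le
  · positivity
  · intro m j hj hm
    split_ifs with h
    · rw [sub_self, norm_zero]; positivity
    · rw [sub_zero, norm_mul, norm_pow, hε]
      have := TT_norm (x := x) hω p hj hm
      have h3 : δ ^ (m + j) ≤ δ ^ (N + 1) := pow_le_pow_of_le_one hd h1 (by omega)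
      gcongr

lemma GZ_norm {x ω : ℂ} {κ δ : ℝ} (hω : ‖ω‖ = 1) (hδ : 0 < δ) (p : ℝ)
    (hp : κ ≤ (6 * ω ^ 2 + 4 * ((p * δ : ℝ) : ℂ) * ω + ((p * δ : ℝ) : ℂ) ^ 2).re)
    (hx : ‖x‖ * δ ≤ κ / 2) :
    ‖GG x (ω * p) * Complex.exp (ZZ x (δ / ω ^ 2) (ω * p))‖
      ≤ Real.exp (-(κ / 2) * p ^ 2 + 2 * ‖x‖ * |p|) := by
  have hω0 : ω ≠ 0 := by rintro rfl; simp at hω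
  unfold GG ZZ
  rw [← Complex.exp_add, Complex.norm_exp]
  apply Real.exp_le_exp.mpr
  have e : -6 * (ω * (p : ℂ)) ^ 2 - 2 * x * (ω * p) +
      -(δ / ω ^ 2 * (4 * (ω * p) ^ 3 + x * (ω * p) ^ 2) + (δ / ω ^ 2) ^ 2 * (ω * p) ^ 4)
      = ((-p ^ 2 : ℝ) : ℂ) * (6 * ω ^ 2 + 4 * ((p * δ : ℝ) : ℂ) * ω + ((p * δ : ℝ) : ℂ) ^ 2)
        + (-(2 * x * (ω * p)) + -(x * ((δ * p ^ 2 : ℝ) : ℂ))) := by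
    push_cast
    field_simp
    ring
  rw [e, Complex.add_re, Complex.re_ofReal_mul]
  have h2 : (-(2 * x * (ω * (p : ℂ))) + -(x * ((δ * p ^ 2 : ℝ) : ℂ))).re
      ≤ 2 * ‖x‖ * |p| + ‖x‖ * (δ * p ^ 2) := by
    refine (Complex.re_le_norm _).trans ((norm_add_le _ _).trans (le_of_eq ?_))
    rw [norm_neg, norm_neg, norm_mul, norm_mul, norm_mul, norm_mul, hω, Complex.norm_real,
      Complex.norm_real, Real.norm_of_nonneg (show 0 ≤ δ * p ^ 2 by positivity), Real.norm_eq_abs]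
    norm_num
  nlinarith [sq_nonneg p, mul_le_mul_of_nonneg_left hp (sq_nonneg p),
    mul_le_mul_of_nonneg_right hx (sq_nonneg p)]

lemma key_est (x ω : ℂ) (κ b : ℝ) (N : ℕ) (hω : ‖ω‖ = 1) (hκ : 0 < κ) (hκ' : κ ≤ 6 * (ω ^ 2).re)
    (hb : 0 < b) :
    ∃ C : ℝ, ∀ (δ : ℝ) (D : Set ℝ), 0 < δ → δ ≤ 1 → ‖x‖ * δ ≤ κ / 2 → MeasurableSet D →
      (∀ p ∈ D, κ ≤ (6 * ω ^ 2 + 4 * ((p * δ : ℝ) : ℂ) * ω + ((p * δ : ℝ) : ℂ) ^ 2).re) →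
      (∀ p ∉ D, b ≤ |p| * δ) →
      ‖(∫ p in D, GG x (ω * p) * Complex.exp (ZZ x (δ / ω ^ 2) (ω * p)))
        - ∫ p : ℝ, GG x (ω * p) * PP x (δ / ω ^ 2) (ω * p) N‖ ≤ C * δ ^ (N + 1) := by
  set K : ℝ := 2 + (N + 1) ^ 2 + b⁻¹ ^ (N + 1) * (N + 1).factorial * (N + 1) ^ 2 with hK
  have hK0 : 0 ≤ b⁻¹ ^ (N + 1) * (N + 1).factorial * ((N : ℝ) + 1) ^ 2 := by positivity
  set g : ℝ → ℝ := fun p => Real.exp (-(κ / 2) * p ^ 2 + 2 * ‖x‖ * |p|) with hg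
  set W : ℝ → ℝ := fun p => K * (VV x p ^ (N + 1) * Real.exp |p| * g p) with hW
  have hgi : Integrable g := integrable_gauss_abs _ (by positivity)
  have hWi : Integrable W := by
    have := (integrable_gauss_abs (2 * ‖x‖ + (N + 1) + 1) (κ := κ / 2) (by positivity)).const_mul
      (K * QQ x ^ (N + 1))
    refine this.congr (ae_of_all _ fun p => ?_)
    simp only [hW, hg, VV]
    rw [mul_pow, ← Real.exp_nat_mul]
    have : Real.exp (-(κ / 2) * p ^ 2 + (2 * ‖x‖ + (N + 1) + 1) * |p|)
      = Real.exp (((N + 1 : ℕ) : ℝ) * |p|) * Real.exp |p| * Real.exp (-(κ / 2) * p ^ 2 + 2 * ‖x‖ * |p|) := by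
      rw [← Real.exp_add, ← Real.exp_add]; push_cast; ring_nf
    rw [this]; ring
  have hgG : ∀ p : ℝ, ‖GG x (ω * p)‖ ≤ g p := by
    intro p
    refine (GG_norm hω hκ' p).trans (Real.exp_le_exp.mpr ?_)
    nlinarith [sq_nonneg p]
  refine ⟨∫ p, W p, ?_⟩
  intro δ D hδ hδ1 hx hD h1 h2
  set ε : ℂ := δ / ω ^ 2 with hε
  have hεn : ‖ε‖ = δ := by
    rw [hε, norm_div, norm_pow, hω]; simp [abs_of_pos hδ]
  have hbd1 : ∀ p ∈ D, ‖GG x (ω * p) * Complex.exp (ZZ x ε (ω * p))‖ ≤ g p :=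
    fun p hp => GZ_norm hω hδ p (h1 p hp) hx
  have hi1 : Integrable (D.indicator fun p : ℝ => GG x (ω * p) * Complex.exp (ZZ x ε (ω * p))) := by
    refine hgi.mono' ?_ (ae_of_all _ fun p => ?_)
    · apply AEStronglyMeasurable.indicator _ hD
      apply Continuous.aestronglyMeasurable
      unfold GG ZZ; fun_prop
    · by_cases hp : p ∈ D
      · rw [Set.indicator_of_mem hp]; exact hbd1 p hp
      · rw [Set.indicator_of_notMem hp, norm_zero]; positivity
  have hV := one_le_VV x
  have hi2 : Integrable (fun p : ℝ => GG x (ω * p) * PP x ε (ω * p) N) := by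
    refine (hWi.mono' ?_ (ae_of_all _ fun p => ?_))
    · apply Continuous.aestronglyMeasurable
      unfold GG PP TT; 
      refine Continuous.mul (by fun_prop) ?_
      refine continuous_finsetSum _ fun m _ => continuous_finsetSum _ fun j _ => ?_
      split_ifs
      · fun_prop
      · fun_prop
    · rw [norm_mul]
      have hp1 := PP_norm (x := x) hω hδ1 hεn p N
      have hv : VV x p ^ N ≤ VV x p ^ (N + 1) := pow_le_pow_right₀ (hV p) (by omega)
      have he : 1 ≤ Real.exp |p| := Real.one_le_exp (abs_nonneg p)
      have hV0 : 0 ≤ VV x p := zero_le_one.trans (hV p)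
      have hg0 : 0 ≤ g p := (Real.exp_pos _).le
      calc _ ≤ g p * (((N : ℝ) + 1) ^ 2 * VV x p ^ N) := by gcongr; exact hgG p
        _ ≤ g p * (K * (VV x p ^ (N + 1) * Real.exp |p|)) := by
            gcongr
            · linarith
            · nlinarith [pow_nonneg hV0 (N + 1)]
        _ = W p := by simp only [hW]; ring
  rw [← integral_indicator hD, ← integral_sub hi1 hi2, mul_comm, ← integral_const_mul]
  refine norm_integral_le_of_norm_le (hWi.const_mul _) (ae_of_all _ fun p => ?_)
  have hV0 : 0 ≤ VV x p := zero_le_one.trans (hV p)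
  have hv : VV x p ^ N ≤ VV x p ^ (N + 1) := pow_le_pow_right₀ (hV p) (by omega)
  have he : 1 ≤ Real.exp |p| := Real.one_le_exp (abs_nonneg p)
  have hg0 : 0 ≤ g p := (Real.exp_pos _).le
  have hVN : 0 ≤ VV x p ^ (N + 1) := pow_nonneg hV0 (N + 1)
  by_cases hp : p ∈ D
  · rw [Set.indicator_of_mem hp]
    set z := ZZ x ε (ω * p) with hz
    have hr := exp_rem (N + 1) z
    have hzn := ZZ_norm (x := x) hω hδ1 hεn p
    have hdf := PP_diff (x := x) hω hδ1 hεn p N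
    have hb1 := hbd1 p hp
    rw [← hz] at hzn hdf hb1
    rw [norm_mul, Complex.norm_exp] at hb1
    have hb0 := hgG p
    have split : GG x (ω * p) * Complex.exp z - GG x (ω * p) * PP x ε (ω * p) N
      = GG x (ω * p) * (Complex.exp z - ∑ m ∈ Finset.range (N + 1), z ^ m / (m.factorial : ℂ))
        + GG x (ω * p) * (∑ m ∈ Finset.range (N + 1), z ^ m / (m.factorial : ℂ) - PP x ε (ω * p) N) := by
      ring
    rw [split]
    refine (norm_add_le _ _).trans ?_
    rw [norm_mul, norm_mul]
    calc _ ≤ ‖GG x (ω * p)‖ * ((δ * VV x p) ^ (N + 1) * (1 + Real.exp z.re))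
          + g p * (((N : ℝ) + 1) ^ 2 * (δ ^ (N + 1) * VV x p ^ N)) := by
            gcongr
            refine hr.trans ?_
            gcongr
      _ = δ ^ (N + 1) * (VV x p ^ (N + 1) * (‖GG x (ω * p)‖ + ‖GG x (ω * p)‖ * Real.exp z.re)
          + g p * ((N : ℝ) + 1) ^ 2 * VV x p ^ N) := by rw [mul_pow]; ring
      _ ≤ δ ^ (N + 1) * (VV x p ^ (N + 1) * (g p + g p)
          + g p * ((N : ℝ) + 1) ^ 2 * VV x p ^ (N + 1)) := by gcongr
      _ = δ ^ (N + 1) * ((2 + ((N : ℝ) + 1) ^ 2) * (VV x p ^ (N + 1) * 1 * g p)) := by ring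
      _ ≤ δ ^ (N + 1) * W p := by
          simp only [hW]
          gcongr
          linarith
  · rw [Set.indicator_of_notMem hp, zero_sub, norm_neg, norm_mul]
    have hp1 := PP_norm (x := x) hω hδ1 hεn p N
    have hq := h2 p hp
    have h3 : 1 ≤ (b⁻¹ * (|p| * δ)) ^ (N + 1) := by
      apply one_le_pow₀
      rw [← div_eq_inv_mul, le_div_iff₀ hb]; linarith
    have h4 := abs_pow_le p (N + 1)
    calc _ ≤ g p * (((N : ℝ) + 1) ^ 2 * VV x p ^ N) * 1 := by
          rw [mul_one]; gcongr; exact hgG p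
      _ ≤ g p * (((N : ℝ) + 1) ^ 2 * VV x p ^ (N + 1)) * (b⁻¹ * (|p| * δ)) ^ (N + 1) := by gcongr
      _ = δ ^ (N + 1) * (b⁻¹ ^ (N + 1) * |p| ^ (N + 1) * ((N : ℝ) + 1) ^ 2 * (VV x p ^ (N + 1) * g p)) := by
          rw [mul_pow, mul_pow]; ring
      _ ≤ δ ^ (N + 1) * (b⁻¹ ^ (N + 1) * ((N + 1).factorial * Real.exp |p|) * ((N : ℝ) + 1) ^ 2 * (VV x p ^ (N + 1) * g p)) := by
          gcongr
      _ = δ ^ (N + 1) * ((b⁻¹ ^ (N + 1) * (N + 1).factorial * ((N : ℝ) + 1) ^ 2) * (VV x p ^ (N + 1) * Real.exp |p| * g p)) := by ring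
      _ ≤ δ ^ (N + 1) * W p := by
          simp only [hW]
          gcongr
          rw [hK]
          nlinarith [sq_nonneg ((N : ℝ) + 1)]

/-- coefficients -/
noncomputable def BB (x : ℂ) (n : ℕ) : ℂ :=
  ∑ m ∈ Finset.Icc ((n + 1) / 2) n, ∑ k ∈ Finset.range (2 * m - n + 1),
    (-1) ^ m * x ^ k * 4 ^ (2 * m - n - k) /
      ((k.factorial : ℂ) * ((2 * m - n - k).factorial : ℂ) * ((n - m).factorial : ℂ)) *
      Mom x (2 * m + n - k)

lemma TT_expand (x u : ℂ) (m n : ℕ) (h1 : m ≤ n) (h2 : n ≤ 2 * m) :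
    TT x u m (n - m) = ∑ k ∈ Finset.range (2 * m - n + 1),
      (-1) ^ m * x ^ k * 4 ^ (2 * m - n - k) /
      ((k.factorial : ℂ) * ((2 * m - n - k).factorial : ℂ) * ((n - m).factorial : ℂ)) *
      u ^ (2 * m + n - k) := by
  unfold TT
  have e : m - (n - m) = 2 * m - n := by omega
  rw [e, add_comm, add_pow, Finset.mul_sum, Finset.sum_mul]
  apply Finset.sum_congr rfl
  intro k hk
  rw [Finset.mem_range] at hk
  obtain ⟨j, rfl⟩ : ∃ j, n = m + j := ⟨n - m, by omega⟩
  obtain ⟨d, rfl⟩ : ∃ d, m = j + k + d := ⟨m - j - k, by omega⟩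
  have e1 : 2 * (j + k + d) - (j + k + d + j) = k + d := by omega
  have e2 : k + d - k = d := by omega
  have e3 : j + k + d + j - (j + k + d) = j := by omega
  have e4 : 2 * (j + k + d) + (j + k + d + j) - k = 2 * k + 3 * d + 4 * j := by omega
  rw [e1, e2, e3, e4]
  have hc := Nat.choose_mul_factorial_mul_factorial (show k ≤ k + d by omega)
  rw [e2] at hc
  have hc' : (((k + d).choose k : ℕ) : ℂ) * (k.factorial : ℂ) * (d.factorial : ℂ)
    = ((k + d).factorial : ℂ) := by exact_mod_cast hc
  have h1 : (k.factorial : ℂ) ≠ 0 := by exact_mod_cast (Nat.factorial_ne_zero _)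
  have h2 : (d.factorial : ℂ) ≠ 0 := by exact_mod_cast (Nat.factorial_ne_zero _)
  have h3 : ((k + d).factorial : ℂ) ≠ 0 := by exact_mod_cast (Nat.factorial_ne_zero _)
  have h4 : (j.factorial : ℂ) ≠ 0 := by exact_mod_cast (Nat.factorial_ne_zero _)
  have : (((k + d).choose k : ℕ) : ℂ) = ((k + d).factorial : ℂ) / ((k.factorial : ℂ) * (d.factorial : ℂ)) := by
    rw [← hc']; field_simp
  rw [this]
  field_simp
  simp only [mul_pow, pow_add, pow_mul]
  ring

lemma PP_reindex (x ε u : ℂ) (N : ℕ) :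
    PP x ε u N = ∑ n ∈ Finset.range (N + 1), ∑ m ∈ Finset.Icc ((n + 1) / 2) n,
      ε ^ n * TT x u m (n - m) := by
  unfold PP
  simp_rw [← Finset.sum_filter]
  rw [Finset.sum_sigma', Finset.sum_sigma']
  refine Finset.sum_bij' (fun i _ => ⟨i.1 + i.2, i.1⟩) (fun i _ => ⟨i.2, i.1 - i.2⟩) ?_ ?_ ?_ ?_ ?_
  · rintro ⟨m, j⟩ h
    simp at h ⊢
    omega
  · rintro ⟨n, m⟩ h
    simp at h ⊢
    omega
  · rintro ⟨m, j⟩ h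
    simp
  · rintro ⟨n, m⟩ h
    simp at h ⊢
    omega
  · rintro ⟨m, j⟩ h
    simp

lemma PP_integral {x ω : ℂ} (hω : ‖ω‖ = 1) (hre : 0 < ω.re) (h2 : 0 < (ω ^ 2).re) (ε : ℂ) (N : ℕ) :
    ∫ p : ℝ, GG x (ω * p) * PP x ε (ω * p) N
      = (Real.sqrt (π / 6) : ℝ) * Complex.exp (x ^ 2 / 6) / ω *
        ∑ n ∈ Finset.range (N + 1), ε ^ n * BB x n := by
  have hint := fun q => GG_mom_integrable (x := x) (ω := ω) (κ := 6 * (ω ^ 2).re) hω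
    (by linarith) le_rfl q
  have e : ∀ p : ℝ, GG x (ω * p) * PP x ε (ω * p) N =
      ∑ n ∈ Finset.range (N + 1), ∑ m ∈ Finset.Icc ((n + 1) / 2) n,
        ∑ k ∈ Finset.range (2 * m - n + 1),
      (ε ^ n * ((-1) ^ m * x ^ k * 4 ^ (2 * m - n - k) /
      ((k.factorial : ℂ) * ((2 * m - n - k).factorial : ℂ) * ((n - m).factorial : ℂ)))) *
      (GG x (ω * p) * (ω * p) ^ (2 * m + n - k)) := by
    intro p
    rw [PP_reindex, Finset.mul_sum]
    apply Finset.sum_congr rfl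
    intro n _
    rw [Finset.mul_sum]
    apply Finset.sum_congr rfl
    intro m hm
    rw [Finset.mem_Icc] at hm
    rw [TT_expand x _ m n (by omega) (by omega), Finset.mul_sum, Finset.mul_sum]
    apply Finset.sum_congr rfl
    intro k _
    ring
  simp_rw [e]
  have i3 : ∀ n m k, Integrable (fun p : ℝ => (ε ^ n * ((-1) ^ m * x ^ k * 4 ^ (2 * m - n - k) /
      ((k.factorial : ℂ) * ((2 * m - n - k).factorial : ℂ) * ((n - m).factorial : ℂ)))) *
      (GG x (ω * p) * (ω * p) ^ (2 * m + n - k))) := fun n m k => (hint _).const_mul _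
  rw [integral_finsetSum _ (fun n _ => integrable_finsetSum _ fun m _ =>
    integrable_finsetSum _ fun k _ => i3 n m k), Finset.mul_sum]
  apply Finset.sum_congr rfl
  intro n _
  rw [integral_finsetSum _ (fun m _ => integrable_finsetSum _ fun k _ => i3 n m k)]
  unfold BB
  rw [Finset.mul_sum, Finset.mul_sum]
  apply Finset.sum_congr rfl
  intro m _
  rw [integral_finsetSum _ (fun k _ => i3 n m k), Finset.mul_sum, Finset.mul_sum]
  apply Finset.sum_congr rfl
  intro k _
  rw [integral_const_mul, GG_mom hω hre h2]
  ring

noncomputable def ff (x y w : ℂ) : ℂ := Complex.exp (-w ^ 4 - x * w ^ 2 + Complex.I * y * w)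

lemma ff_bound (x y : ℂ) (h : ℝ) : ∃ K : ℝ, ∀ u v : ℝ, |v| ≤ |h| →
    ‖ff x y (u + v * Complex.I)‖ ≤ K * Real.exp (-u ^ 2) := by
  set a : ℝ := 6 * h ^ 2 + ‖x‖ + ‖y‖ with ha
  set d : ℝ := ‖x‖ * h ^ 2 + ‖y‖ * (1 + |h|) with hd
  refine ⟨Real.exp (d + (a + 1) ^ 2), fun u v hv => ?_⟩
  unfold ff
  rw [Complex.norm_exp, ← Real.exp_add]
  apply Real.exp_le_exp.mpr
  set w : ℂ := u + v * Complex.I with hw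
  have hv2 : v ^ 2 ≤ h ^ 2 := sq_le_sq.mpr hv
  have h1 : (-w ^ 4).re = -(u ^ 4 - 6 * u ^ 2 * v ^ 2 + v ^ 4) := by
    have : -w ^ 4 = ((-(u ^ 4 - 6 * u ^ 2 * v ^ 2 + v ^ 4) : ℝ) : ℂ)
        + ((-(4 * u ^ 3 * v - 4 * u * v ^ 3) : ℝ) : ℂ) * Complex.I := by
      rw [hw]; push_cast
      have hI2 := Complex.I_sq
      have hI3 : Complex.I ^ 3 = -Complex.I := Complex.I_pow_three
      have hI4 : Complex.I ^ 4 = 1 := Complex.I_pow_four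
      ring_nf
      rw [hI2, hI3, hI4]; ring
    rw [this, Complex.add_re, Complex.re_ofReal_mul, Complex.ofReal_re, Complex.I_re]; ring
  have hwn : ‖w‖ ^ 2 = u ^ 2 + v ^ 2 := by
    rw [hw, Complex.sq_norm, Complex.normSq_add_mul_I]
  have h2 : (-(x * w ^ 2)).re ≤ ‖x‖ * (u ^ 2 + v ^ 2) := by
    refine (Complex.re_le_norm _).trans (le_of_eq ?_)
    rw [norm_neg, norm_mul, norm_pow, hwn]
  have h3 : (Complex.I * y * w).re ≤ ‖y‖ * (|u| + |v|) := by
    refine (Complex.re_le_norm _).trans ?_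
    rw [norm_mul, norm_mul, Complex.norm_I, one_mul]
    gcongr
    rw [hw]
    refine (norm_add_le _ _).trans ?_
    simp
  have e : (-w ^ 4 - x * w ^ 2 + Complex.I * y * w).re
      = (-w ^ 4).re + (-(x * w ^ 2)).re + (Complex.I * y * w).re := by
    simp [sub_eq_add_neg]
  rw [e, h1]
  have hu : |u| ≤ u ^ 2 + 1 := by
    rw [← sq_abs]; nlinarith [sq_nonneg (|u| - 1), abs_nonneg u]
  have hx := norm_nonneg x
  have hy := norm_nonneg y
  have k1 : ‖y‖ * (|u| + |v|) ≤ ‖y‖ * (u ^ 2 + 1 + |h|) := by gcongr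
  have k2 : ‖x‖ * (u ^ 2 + v ^ 2) ≤ ‖x‖ * (u ^ 2 + h ^ 2) := by gcongr
  have k3 : 6 * u ^ 2 * v ^ 2 ≤ 6 * u ^ 2 * h ^ 2 := by gcongr
  have k4 : 0 ≤ v ^ 4 := by positivity
  have k5 : -u ^ 4 + a * u ^ 2 ≤ (a + 1) ^ 2 - u ^ 2 := by
    nlinarith [sq_nonneg (u ^ 2 - (a + 1)), sq_nonneg (u ^ 2)]
  nlinarith

lemma ff_cont (x y : ℂ) (h : ℝ) : Continuous (fun u : ℝ => ff x y (u + h * Complex.I)) := by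
  unfold ff; fun_prop

lemma ff_int (x y : ℂ) (h : ℝ) : Integrable (fun u : ℝ => ff x y (u + h * Complex.I)) := by
  obtain ⟨K, hK⟩ := ff_bound x y h
  have hg : Integrable (fun u : ℝ => K * Real.exp (-u ^ 2)) := by
    have := (integrable_exp_neg_mul_sq (b := 1) one_pos).const_mul K
    simpa using this
  exact hg.mono' (ff_cont x y h).aestronglyMeasurable (ae_of_all _ fun u => hK u h le_rfl)

lemma P_eq (x y : ℂ) (h : ℝ) : P x y = (∫ u : ℝ, ff x y (u + h * Complex.I)) / 2 := by
  obtain ⟨K, hK⟩ := ff_bound x y h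
  rw [← shift_contour (ff x y) (by unfold ff; fun_prop) h K hK]
  have i0 : Integrable (fun u : ℝ => ff x y u) := by simpa using ff_int x y 0
  have i1 : Integrable (fun u : ℝ => ff x y (-u : ℝ)) := i0.comp_neg
  rw [← intervalIntegral.integral_Iic_add_Ioi (b := 0) i0.integrableOn i0.integrableOn]
  have := integral_comp_neg_Ioi 0 (fun u : ℝ => ff x y u)
  rw [neg_zero] at this
  rw [← this, ← integral_add i1.integrableOn i0.integrableOn, ← integral_div]
  unfold P
  congr 1
  ext t
  unfold ff
  have e1 : -((-t : ℝ) : ℂ) ^ 4 - x * ((-t : ℝ) : ℂ) ^ 2 + Complex.I * y * ((-t : ℝ) : ℂ)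
    = (-(t : ℂ) ^ 4 - x * (t : ℂ) ^ 2) + -(y * t) * Complex.I := by push_cast; ring
  have e2 : -(t : ℂ) ^ 4 - x * (t : ℂ) ^ 2 + Complex.I * y * (t : ℂ)
    = (-(t : ℂ) ^ 4 - x * (t : ℂ) ^ 2) + (y * t) * Complex.I := by ring
  rw [e1, e2, Complex.exp_add, Complex.exp_add, Complex.cos]
  ring

lemma ff_scaled (x y ω : ℂ) (R : ℝ) (hR : 0 < R) (hω : ω ≠ 0)
    (hy : Complex.I * y = 4 * (R * ω) ^ 3) (p : ℝ) :
    ff x y (((R * ω.re + p / R : ℝ) : ℂ) + (R * ω.im : ℝ) * Complex.I)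
      = Complex.exp (3 * (R * ω) ^ 4 - x * (R * ω) ^ 2) *
        (GG x (ω * p) * Complex.exp (ZZ x (((R ^ 2)⁻¹ : ℝ) / ω ^ 2) (ω * p))) := by
  have hRc : (R : ℂ) ≠ 0 := by exact_mod_cast hR.ne'
  have e : (((R * ω.re + p / R : ℝ) : ℂ) + (R * ω.im : ℝ) * Complex.I) = R * ω + p / R := by
    push_cast
    conv_rhs => rw [← Complex.re_add_im ω]
    ring
  rw [e]
  unfold ff GG ZZ
  rw [hy, ← Complex.exp_add, ← Complex.exp_add]
  congr 1
  push_cast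
  field_simp
  ring

lemma J_eq (x y ω : ℂ) (R : ℝ) (hR : 0 < R) (hω : ω ≠ 0)
    (hy : Complex.I * y = 4 * (R * ω) ^ 3) (D : Set ℝ) (hD : MeasurableSet D) :
    ∫ u in D, ff x y (u + (R * ω.im : ℝ) * Complex.I)
      = Complex.exp (3 * (R * ω) ^ 4 - x * (R * ω) ^ 2) / R *
        ∫ p in {p : ℝ | R * ω.re + p / R ∈ D},
          (GG x (ω * p) * Complex.exp (ZZ x (((R ^ 2)⁻¹ : ℝ) / ω ^ 2) (ω * p))) := by
  have hRc : (R : ℂ) ≠ 0 := by exact_mod_cast hR.ne'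
  have hD' : MeasurableSet {p : ℝ | R * ω.re + p / R ∈ D} :=
    (show Measurable (fun p : ℝ => R * ω.re + p / R) by fun_prop) hD
  rw [← integral_indicator hD, ← integral_indicator hD']
  have h1 := integral_add_left_eq_self (μ := volume)
    (D.indicator fun u : ℝ => ff x y (u + (R * ω.im : ℝ) * Complex.I)) (R * ω.re)
  have h2 := Measure.integral_comp_div (fun v : ℝ =>
    (D.indicator fun u : ℝ => ff x y (u + (R * ω.im : ℝ) * Complex.I)) (R * ω.re + v)) R
  rw [h1] at h2
  have h3 : ∀ p : ℝ, (D.indicator fun u : ℝ => ff x y (u + (R * ω.im : ℝ) * Complex.I)) (R * ω.re + p / R)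
      = Complex.exp (3 * (R * ω) ^ 4 - x * (R * ω) ^ 2) *
        ({p : ℝ | R * ω.re + p / R ∈ D}.indicator (fun p : ℝ =>
          (GG x (ω * p) * Complex.exp (ZZ x (((R ^ 2)⁻¹ : ℝ) / ω ^ 2) (ω * p))))) p := by
    intro p
    by_cases hp : R * ω.re + p / R ∈ D
    · rw [Set.indicator_of_mem hp, Set.indicator_of_mem (by exact hp)]
      exact ff_scaled x y ω R hR hω hy p
    · rw [Set.indicator_of_notMem hp, Set.indicator_of_notMem (by exact hp), mul_zero]
  simp_rw [h3] at h2
  rw [integral_const_mul, abs_of_pos hR] at h2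
  rw [div_mul_eq_mul_div, h2, Complex.real_smul]
  field_simp

noncomputable def ee (x t : ℂ) : ℂ :=
  (Real.sqrt (π / 6) : ℝ) / t * Complex.exp (3 * t ^ 4 - x * t ^ 2 + x ^ 2 / 6)

lemma J_est (x ω : ℂ) (κ b : ℝ) (N : ℕ) (hω : ‖ω‖ = 1) (hre : 0 < ω.re) (hκ : 0 < κ)
    (hκ' : κ ≤ 6 * (ω ^ 2).re) (hb : 0 < b) :
    ∃ C : ℝ, ∀ (R : ℝ) (y : ℂ) (D : Set ℝ), 1 ≤ R → ‖x‖ * (R ^ 2)⁻¹ ≤ κ / 2 → MeasurableSet D →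
      Complex.I * y = 4 * (R * ω) ^ 3 →
      (∀ p, R * ω.re + p / R ∈ D →
        κ ≤ (6 * ω ^ 2 + 4 * ((p * (R ^ 2)⁻¹ : ℝ) : ℂ) * ω + ((p * (R ^ 2)⁻¹ : ℝ) : ℂ) ^ 2).re) →
      (∀ p, R * ω.re + p / R ∉ D → b ≤ |p| * (R ^ 2)⁻¹) →
      ‖(∫ u in D, ff x y (u + (R * ω.im : ℝ) * Complex.I))
        - ee x (R * ω) * ∑ n ∈ Finset.range (N + 1), ((R * ω) ^ 2)⁻¹ ^ n * BB x n‖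
          ≤ C * ‖ee x (R * ω)‖ * (R ^ 2)⁻¹ ^ (N + 1) := by
  obtain ⟨C, hC⟩ := key_est x ω κ b N hω hκ hκ' hb
  have hω0 : ω ≠ 0 := by rintro rfl; simp at hω
  set s : ℝ := Real.sqrt (π / 6) with hs
  have hs0 : 0 < s := by positivity
  refine ⟨C / (s * ‖Complex.exp (x ^ 2 / 6)‖), ?_⟩
  intro R y D hR hx hD hy h1 h2
  have hR0 : 0 < R := by linarith
  have hRc : (R : ℂ) ≠ 0 := by exact_mod_cast hR0.ne'
  have hD' : MeasurableSet {p : ℝ | R * ω.re + p / R ∈ D} :=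
    (show Measurable (fun p : ℝ => R * ω.re + p / R) by fun_prop) hD
  have hk := hC ((R ^ 2)⁻¹) _ (by positivity) (inv_le_one_of_one_le₀ (one_le_pow₀ hR)) hx hD'
    h1 h2
  rw [PP_integral hω hre (by linarith)] at hk
  rw [J_eq x y ω R hR0 hω0 hy D hD]
  set I0 := ∫ p in {p : ℝ | R * ω.re + p / R ∈ D},
          (GG x (ω * p) * Complex.exp (ZZ x (((R ^ 2)⁻¹ : ℝ) / ω ^ 2) (ω * p))) with hI0
  have hε : ((((R ^ 2)⁻¹ : ℝ) : ℂ) / ω ^ 2) = ((R * ω) ^ 2)⁻¹ := by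
    push_cast; field_simp
  rw [hε] at hk
  set SS := ∑ n ∈ Finset.range (N + 1), (((R : ℂ) * ω) ^ 2)⁻¹ ^ n * BB x n with hSS
  have hee : ee x (R * ω) = Complex.exp (3 * (R * ω) ^ 4 - x * (R * ω) ^ 2) / R *
      ((s : ℂ) * Complex.exp (x ^ 2 / 6) / ω) := by
    unfold ee
    rw [← hs, Complex.exp_add]
    field_simp
  have hn : ‖ee x (R * ω)‖ = ‖Complex.exp (3 * (R * ω) ^ 4 - x * (R * ω) ^ 2) / R‖ *
      (s * ‖Complex.exp (x ^ 2 / 6)‖) := by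
    rw [hee, norm_mul, norm_div ((s : ℂ) * _), norm_mul (s : ℂ), hω, div_one, Complex.norm_real,
      Real.norm_of_nonneg hs0.le]
  have hx0 : 0 < ‖Complex.exp (x ^ 2 / 6)‖ := norm_pos_iff.mpr (Complex.exp_ne_zero _)
  rw [hn]
  have : Complex.exp (3 * (R * ω) ^ 4 - x * (R * ω) ^ 2) / R * I0 - ee x (R * ω) * SS
      = Complex.exp (3 * (R * ω) ^ 4 - x * (R * ω) ^ 2) / R *
        (I0 - (s : ℂ) * Complex.exp (x ^ 2 / 6) / ω * SS) := by
    rw [hee]; ring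
  rw [this, norm_mul]
  calc _ ≤ ‖Complex.exp (3 * (R * ω) ^ 4 - x * (R * ω) ^ 2) / R‖ * (C * (R ^ 2)⁻¹ ^ (N + 1)) := by
        gcongr
    _ = _ := by field_simp

noncomputable def Lam : ℝ := (2 : ℝ) ^ ((1 : ℝ) / 3)
lemma Lam_pos : 0 < Lam := by unfold Lam; positivity
lemma Lam_cube : Lam ^ 3 = 2 := by
  unfold Lam; rw [← Real.rpow_natCast, ← Real.rpow_mul (by norm_num)]; norm_num

lemma c_eq (x : ℂ) (q : ℕ) : c x q = (-1) ^ q * ((Lam : ℂ) ^ 2) ^ q * Mom x q := by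
  unfold c Mom
  rw [Finset.mul_sum]
  apply Finset.sum_congr rfl
  intro k hk
  rw [Finset.mem_range] at hk
  obtain ⟨d, rfl⟩ : ∃ d, q = 2 * k + d := ⟨q - 2 * k, by omega⟩
  have e : 2 * k + d - 2 * k = d := by omega
  rw [e]
  have h1 : (3 : ℝ) ^ ((k : ℤ) - ((2 * k + d : ℕ) : ℤ)) = ((3 : ℝ) ^ (k + d))⁻¹ := by
    have : (k : ℤ) - ((2 * k + d : ℕ) : ℤ) = -((k + d : ℕ) : ℤ) := by push_cast; ring
    rw [this, zpow_neg, zpow_natCast]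
  have h2 : (2 : ℝ) ^ (-((2 * k + d : ℕ) : ℝ) / 3 - (k : ℝ)) = (Lam ^ (2 * k + d) * 2 ^ k)⁻¹ := by
    unfold Lam
    rw [← Real.rpow_natCast, ← Real.rpow_mul (by norm_num), ← Real.rpow_natCast 2 k,
      ← Real.rpow_add (by norm_num), ← Real.rpow_neg (by norm_num)]
    congr 1; ring
  rw [h1, h2]
  have h6 : ((-1 : ℂ)) ^ (2 * k + d) * (-x / 6) ^ d = x ^ d * ((6 : ℂ) ^ d)⁻¹ := by
    rw [pow_add, pow_mul]
    have : (-1 : ℂ) ^ d * (-x / 6) ^ d = (x / 6) ^ d := by rw [← mul_pow]; congr 1; ring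
    rw [neg_one_sq, one_pow, one_mul, this, div_pow]; rfl
  have hL0 : (Lam : ℂ) ≠ 0 := by exact_mod_cast Lam_pos.ne'
  have hL3 : (Lam : ℂ) ^ 3 = 2 := by exact_mod_cast Lam_cube
  have hk1 : (k.factorial : ℂ) ≠ 0 := by exact_mod_cast (Nat.factorial_ne_zero _)
  have hk2 : (d.factorial : ℂ) ≠ 0 := by exact_mod_cast (Nat.factorial_ne_zero _)
  have h7 : ((3 : ℂ) ^ (k + d))⁻¹ * ((Lam : ℂ) ^ (2 * k + d) * 2 ^ k)⁻¹
      = ((Lam : ℂ) ^ 2) ^ (2 * k + d) * ((6 : ℂ) ^ d)⁻¹ * (1 / 24) ^ k := by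
    have : ((Lam : ℂ) ^ 2) ^ (2 * k + d) * (Lam : ℂ) ^ (2 * k + d) = 2 ^ (2 * k + d) := by
      rw [← mul_pow, ← hL3]; ring
    have e6d : (6 : ℂ) ^ d = 2 ^ d * 3 ^ d := by rw [← mul_pow]; norm_num
    have e24k : ((1 : ℂ) / 24) ^ k = (2 ^ (3 * k) * 3 ^ k)⁻¹ := by
      rw [pow_mul, ← mul_pow, one_div, inv_pow]; norm_num
    rw [e6d, e24k]
    have e8 : ((Lam : ℂ) ^ 2) ^ (2 * k + d) = 2 ^ (2 * k + d) / (Lam : ℂ) ^ (2 * k + d) := by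
      rw [← this]; field_simp
    rw [e8]
    field_simp
    ring
  push_cast
  have : (-1 : ℂ) ^ (2 * k + d) * ((Lam : ℂ) ^ 2) ^ (2 * k + d) *
      (((2 * k + d).factorial : ℂ) / ((k.factorial : ℂ) * (d.factorial : ℂ)) * (-x / 6) ^ d * (1 / 24) ^ k)
      = ((-1 : ℂ)) ^ (2 * k + d) * (-x / 6) ^ d * (((Lam : ℂ) ^ 2) ^ (2 * k + d) * (1 / 24) ^ k) *
      (((2 * k + d).factorial : ℂ) / ((k.factorial : ℂ) * (d.factorial : ℂ))) := by ring
  rw [this, h6]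
  have h8 : x ^ d * ((6 : ℂ) ^ d)⁻¹ * (((Lam : ℂ) ^ 2) ^ (2 * k + d) * (1 / 24) ^ k)
    = x ^ d * (((Lam : ℂ) ^ 2) ^ (2 * k + d) * ((6 : ℂ) ^ d)⁻¹ * (1 / 24) ^ k) := by ring
  rw [h8, ← h7]
  ring

lemma two_pow_eq (i : ℕ) : (2 : ℂ) ^ ((4 * (i : ℂ)) / 3) = (Lam : ℂ) ^ (4 * i) := by
  have h1 : (4 * (i : ℂ)) / 3 = (((1 : ℝ) / 3 : ℝ) : ℂ) * ((4 * i : ℕ) : ℂ) := by push_cast; ring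
  have h2 : (2 : ℂ) = ((2 : ℝ) : ℂ) := by norm_num
  have h3 : (((1 : ℝ) / 3 : ℝ) : ℂ) * ((4 * i : ℕ) : ℂ) = (((1 : ℝ) / 3 * (4 * i : ℕ) : ℝ) : ℂ) := by
    push_cast; ring
  rw [h1, h2, h3, ← Complex.ofReal_cpow (by norm_num), Real.rpow_mul (by norm_num),
    Real.rpow_natCast]
  unfold Lam
  push_cast; rfl

lemma A_eq (x : ℂ) (n : ℕ) : A x n = (Lam : ℂ) ^ (4 * n) * BB x n := by
  unfold A BB
  rw [Finset.mul_sum]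
  apply Finset.sum_congr rfl
  intro m hm
  rw [Finset.mem_Icc] at hm
  rw [Finset.mul_sum]
  apply Finset.sum_congr rfl
  intro k hk
  rw [Finset.mem_range] at hk
  unfold a
  rw [two_pow_eq, c_eq]
  obtain ⟨j, rfl⟩ : ∃ j, n = m + j := ⟨n - m, by omega⟩
  obtain ⟨d, rfl⟩ : ∃ d, m = j + k + d := ⟨m - j - k, by omega⟩
  have e1 : 2 * (j + k + d) - (j + k + d + j) - k = d := by omega
  have e4 : 2 * (j + k + d) + (j + k + d + j) - k = 2 * k + 3 * d + 4 * j := by omega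
  rw [e1, e4]
  have hL3 : (Lam : ℂ) ^ 3 = 2 := by exact_mod_cast Lam_cube
  have h4 : (4 : ℂ) = (Lam : ℂ) ^ 6 := by
    rw [show (Lam : ℂ) ^ 6 = ((Lam : ℂ) ^ 3) ^ 2 by ring, hL3]; norm_num
  have hs : (-1 : ℂ) ^ (j + k + d + j + k) * (-1) ^ (2 * k + 3 * d + 4 * j) = 1 := by
    rw [← pow_add]
    apply Even.neg_one_pow
    exact ⟨3 * j + 2 * k + 2 * d, by ring⟩
  rw [h4]
  have hp : (Lam : ℂ) ^ (4 * d) * ((Lam : ℂ) ^ 2) ^ (2 * k + 3 * d + 4 * j)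
      = (Lam : ℂ) ^ (4 * (j + k + d + j)) * ((Lam : ℂ) ^ 6) ^ d := by ring
  have : ∀ M W : ℂ, (-1 : ℂ) ^ (j + k + d + j + k) * ((-1) ^ (j + k + d) * x ^ k * (Lam : ℂ) ^ (4 * d) / W) *
      ((-1) ^ (2 * k + 3 * d + 4 * j) * ((Lam : ℂ) ^ 2) ^ (2 * k + 3 * d + 4 * j) * M)
      = ((-1 : ℂ) ^ (j + k + d + j + k) * (-1) ^ (2 * k + 3 * d + 4 * j)) *
       ((Lam : ℂ) ^ (4 * d) * ((Lam : ℂ) ^ 2) ^ (2 * k + 3 * d + 4 * j)) * ((-1) ^ (j + k + d) * x ^ k / W * M) := by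
    intro M W; ring
  rw [this, hs, hp]
  ring

lemma y_pow (r θ : ℝ) (hr : 0 < r) (h1 : -π < θ) (h2 : θ ≤ π) (s : ℂ) :
    ((r : ℂ) * Complex.exp (Complex.I * (θ : ℂ))) ^ s
      = Complex.exp (s * (Real.log r + Complex.I * θ)) := by
  have e : (r : ℂ) * Complex.exp (Complex.I * (θ : ℂ))
      = Complex.exp ((Real.log r : ℝ) + Complex.I * θ) := by
    rw [Complex.exp_add, ← Complex.ofReal_exp, Real.exp_log hr]
  rw [e, Complex.cpow_def_of_ne_zero (Complex.exp_ne_zero _), Complex.log_exp, mul_comm]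
  · simpa using h1
  · simpa using h2

lemma four_pow (s : ℂ) : (4 : ℂ) ^ s = Complex.exp (s * (Real.log 4 : ℝ)) := by
  rw [Complex.cpow_def_of_ne_zero (by norm_num), Complex.ofReal_log (by norm_num), mul_comm]
  norm_num

noncomputable def RR (r : ℝ) : ℝ := Real.exp ((Real.log r - Real.log 4) / 3)
noncomputable def om (θ : ℝ) : ℂ := Complex.exp (Complex.I * (π / 6 + θ / 3))

lemma t_eq (r θ : ℝ) : (RR r : ℂ) * om θ
    = Complex.exp ((Real.log r + Complex.I * θ - Real.log 4) / 3 + Complex.I * π / 6) := by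
  unfold RR om
  rw [Complex.ofReal_exp, ← Complex.exp_add]
  congr 1; push_cast; ring

lemma Iy_eq (r θ : ℝ) (hr : 0 < r) : Complex.I * ((r : ℂ) * Complex.exp (Complex.I * (θ : ℂ)))
    = 4 * ((RR r : ℂ) * om θ) ^ 3 := by
  rw [t_eq, ← Complex.exp_nat_mul]
  have : ((3 : ℕ) : ℂ) * ((Real.log r + Complex.I * θ - Real.log 4) / 3 + Complex.I * π / 6)
    = (Real.log r : ℝ) + Complex.I * θ + -(Real.log 4 : ℝ) + π / 2 * Complex.I := by
    push_cast; ring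
  rw [this, Complex.exp_add, Complex.exp_add, Complex.exp_add, ← Complex.ofReal_neg,
    ← Complex.ofReal_exp, ← Complex.ofReal_exp, Real.exp_log hr, Real.exp_neg,
    Real.exp_log (by norm_num), Complex.exp_pi_div_two_mul_I]
  push_cast
  ring

lemma const_eq : Real.sqrt (π / 3) * (2 : ℝ) ^ (-(5 : ℝ) / 6)
    = Real.sqrt (π / 6) * Real.exp (Real.log 4 / 3) / 2 := by
  have h1 : π / 3 = 2 * (π / 6) := by ring
  have h2 : Real.exp (Real.log 4 / 3) = (2 : ℝ) ^ ((2 : ℝ) / 3) := by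
    rw [Real.rpow_def_of_pos (by norm_num)]
    congr 1
    rw [show (4 : ℝ) = 2 ^ 2 by norm_num, Real.log_pow]; push_cast; ring
  rw [h1, Real.sqrt_mul (by norm_num), h2, Real.sqrt_eq_rpow 2]
  have h3 : (2 : ℝ) ^ ((1 : ℝ) / 2) * (2 : ℝ) ^ (-(5 : ℝ) / 6) = (2 : ℝ) ^ ((2 : ℝ) / 3) / 2 := by
    rw [← Real.rpow_add (by norm_num), ← Real.rpow_sub_one (by norm_num)]
    norm_num
  linear_combination Real.sqrt (π / 6) * h3

lemma E1_eq (x : ℂ) (r θ : ℝ) (hr : 0 < r) (h1 : -π < θ) (h2 : θ ≤ π) :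
    E x ((r : ℂ) * Complex.exp (Complex.I * (θ : ℂ))) 1
      = ee x (RR r * om θ) * Complex.exp (Complex.I * π / 6) / 2 := by
  unfold E ee
  rw [y_pow r θ hr h1 h2, y_pow r θ hr h1 h2, y_pow r θ hr h1 h2, four_pow, four_pow, t_eq,
    ← Complex.exp_nat_mul, ← Complex.exp_nat_mul, div_eq_mul_inv _ (Complex.exp _),
    ← Complex.exp_neg]
  have hc : ((Real.sqrt (π / 3) : ℝ) : ℂ) * (((2 : ℝ) ^ (-(5 : ℝ) / 6) : ℝ) : ℂ)
    = (Real.sqrt (π / 6) : ℝ) * Complex.exp ((Real.log 4 : ℝ) / 3) / 2 := by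
    rw [← Complex.ofReal_mul, const_eq]; push_cast; rfl
  rw [hc]
  have hexp : 3 * Complex.exp (-(4 : ℂ) / 3 * (Real.log 4 : ℝ)) *
        Complex.exp (-(-1 : ℂ) ^ 1 * 2 * (π : ℂ) * Complex.I / 3) *
          Complex.exp ((4 : ℂ) / 3 * (Real.log r + Complex.I * θ))
      - Complex.exp (-(2 : ℂ) / 3 * (Real.log 4 : ℝ)) * x *
         Complex.exp ((2 : ℂ) / 3 * (Real.log r + Complex.I * θ)) *
        Complex.exp (-(-1 : ℂ) ^ 1 * (π : ℂ) * Complex.I / 3)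
      + x ^ 2 / 6
      = 3 * Complex.exp (((4 : ℕ) : ℂ) * ((Real.log r + Complex.I * θ - Real.log 4) / 3 + Complex.I * π / 6))
       - x * Complex.exp (((2 : ℕ) : ℂ) * ((Real.log r + Complex.I * θ - Real.log 4) / 3 + Complex.I * π / 6))
      + x ^ 2 / 6 := by
    have k1 : Complex.exp (((4 : ℕ) : ℂ) * ((Real.log r + Complex.I * θ - Real.log 4) / 3 + Complex.I * π / 6))
        = Complex.exp (-(4 : ℂ) / 3 * (Real.log 4 : ℝ)) *
        Complex.exp (-(-1 : ℂ) ^ 1 * 2 * (π : ℂ) * Complex.I / 3) *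
          Complex.exp ((4 : ℂ) / 3 * (Real.log r + Complex.I * θ)) := by
      rw [← Complex.exp_add, ← Complex.exp_add]; congr 1; push_cast; ring
    have k2 : Complex.exp (((2 : ℕ) : ℂ) * ((Real.log r + Complex.I * θ - Real.log 4) / 3 + Complex.I * π / 6))
        = Complex.exp (-(2 : ℂ) / 3 * (Real.log 4 : ℝ)) *
        Complex.exp ((2 : ℂ) / 3 * (Real.log r + Complex.I * θ)) *
        Complex.exp (-(-1 : ℂ) ^ 1 * (π : ℂ) * Complex.I / 3) := by
      rw [← Complex.exp_add, ← Complex.exp_add]; congr 1; push_cast; ring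
    rw [k1, k2]; ring
  rw [hexp]
  have k3 : Complex.exp (-((Real.log r + Complex.I * θ - Real.log 4) / 3 + Complex.I * π / 6)) *
      Complex.exp (Complex.I * π / 6) = Complex.exp ((Real.log 4 : ℝ) / 3) *
       Complex.exp (-(1 : ℂ) / 3 * (Real.log r + Complex.I * θ)) := by
    rw [← Complex.exp_add, ← Complex.exp_add]; congr 1; ring
  linear_combination (-((Real.sqrt (π / 6) : ℝ) : ℂ) / 2 * Complex.exp (3 * Complex.exp (((4 : ℕ) : ℂ) * ((Real.log r + Complex.I * θ - Real.log 4) / 3 + Complex.I * π / 6))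
       - x * Complex.exp (((2 : ℕ) : ℂ) * ((Real.log r + Complex.I * θ - Real.log 4) / 3 + Complex.I * π / 6))
      + x ^ 2 / 6)) * k3

lemma S1_eq (x : ℂ) (r θ : ℝ) (N : ℕ) (hr : 0 < r) (h1 : -π < θ) (h2 : θ ≤ π) :
    S x ((r : ℂ) * Complex.exp (Complex.I * (θ : ℂ))) 1 N
      = Complex.exp (-(Complex.I * π / 6)) *
        ∑ n ∈ Finset.range (N + 1), (((RR r : ℂ) * om θ) ^ 2)⁻¹ ^ n * BB x n := by
  unfold S
  rw [Finset.mul_sum]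
  apply Finset.sum_congr rfl
  intro n _
  rw [y_pow r θ hr h1 h2, A_eq, t_eq, ← Complex.exp_nat_mul, ← Complex.exp_neg,
    ← Complex.exp_nat_mul]
  have hL : (Lam : ℂ) ^ (4 * n) = Complex.exp (2 * n * (Real.log 4 : ℝ) / 3) := by
    have : Lam = Real.exp (Real.log 2 / 3) := by
      unfold Lam; rw [Real.rpow_def_of_pos (by norm_num)]; congr 1; ring
    rw [this, Complex.ofReal_exp, ← Complex.exp_nat_mul]
    congr 1
    rw [show (4 : ℝ) = 2 ^ 2 by norm_num, Real.log_pow]; push_cast; ring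
  rw [hL]
  have : Complex.exp ((-1 : ℂ) ^ 1 * (2 * (n : ℂ) + 1) * (π : ℂ) * Complex.I / 6) *
      Complex.exp (2 * n * (Real.log 4 : ℝ) / 3) * 
      Complex.exp (-(2 * (n : ℂ)) / 3 * (Real.log r + Complex.I * θ))
    = Complex.exp (-(Complex.I * π / 6)) * Complex.exp (n * -(((2 : ℕ) : ℂ) * ((Real.log r + Complex.I * θ - Real.log 4) / 3 + Complex.I * π / 6))) := by
    rw [← Complex.exp_add, ← Complex.exp_add, ← Complex.exp_add]; congr 1; push_cast; ring
  linear_combination BB x n * this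

lemma ES1_eq (x : ℂ) (r θ : ℝ) (N : ℕ) (hr : 0 < r) (h1 : -π < θ) (h2 : θ ≤ π) :
    E x ((r : ℂ) * Complex.exp (Complex.I * (θ : ℂ))) 1 *
    S x ((r : ℂ) * Complex.exp (Complex.I * (θ : ℂ))) 1 N
      = ee x (RR r * om θ) *
        (∑ n ∈ Finset.range (N + 1), (((RR r : ℂ) * om θ) ^ 2)⁻¹ ^ n * BB x n) / 2 := by
  rw [E1_eq x r θ hr h1 h2, S1_eq x r θ N hr h1 h2]
  have : Complex.exp (Complex.I * π / 6) * Complex.exp (-(Complex.I * π / 6)) = 1 := by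
    rw [← Complex.exp_add]; simp
  linear_combination (ee x (RR r * om θ) *
        (∑ n ∈ Finset.range (N + 1), (((RR r : ℂ) * om θ) ^ 2)⁻¹ ^ n * BB x n) / 2) * this

lemma E1_norm (x : ℂ) (r θ : ℝ) (hr : 0 < r) (h1 : -π < θ) (h2 : θ ≤ π) :
    ‖ee x (RR r * om θ)‖ = 2 * ‖E x ((r : ℂ) * Complex.exp (Complex.I * (θ : ℂ))) 1‖ := by
  rw [E1_eq x r θ hr h1 h2, norm_div, norm_mul]
  have : ‖Complex.exp (Complex.I * π / 6)‖ = 1 := by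
    rw [show Complex.I * π / 6 = ((π / 6 : ℝ) : ℂ) * Complex.I by push_cast; ring,
      Complex.norm_exp_ofReal_mul_I]
  rw [this]; norm_num
  ring

noncomputable def yy (r θ : ℝ) : ℂ := (r : ℂ) * Complex.exp (Complex.I * (θ : ℂ))

lemma yy_conj (r θ : ℝ) : (starRingEnd ℂ) (yy r θ) = yy r (-θ) := by
  unfold yy
  simp [← Complex.exp_conj]

lemma yy_pow (r θ : ℝ) (hr : 0 < r) (h1 : -π < θ) (h2 : θ < π) (s : ℂ) :
    (starRingEnd ℂ) (yy r θ ^ s) = yy r (-θ) ^ ((starRingEnd ℂ) s) := by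
  unfold yy
  rw [y_pow r θ hr h1 h2.le, y_pow r (-θ) hr (by linarith) (by linarith), ← Complex.exp_conj]
  congr 1
  simp

lemma P_conj (x y : ℂ) : (starRingEnd ℂ) (P x y) = P ((starRingEnd ℂ) x) ((starRingEnd ℂ) y) := by
  unfold P
  rw [← integral_conj]
  congr 1
  ext t
  simp [← Complex.exp_conj, ← Complex.cos_conj]

lemma BB_conj (x : ℂ) (n : ℕ) : (starRingEnd ℂ) (BB x n) = BB ((starRingEnd ℂ) x) n := by
  unfold BB Mom
  simp [map_ofNat]

lemma A_conj (x : ℂ) (n : ℕ) : (starRingEnd ℂ) (A x n) = A ((starRingEnd ℂ) x) n := by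
  rw [A_eq, A_eq, ← BB_conj]
  simp

lemma S_conj (x : ℂ) (r θ : ℝ) (hr : 0 < r) (h1 : -π < θ) (h2 : θ < π) (k k' N : ℕ)
    (hk : (-1 : ℂ) ^ k' = - (-1) ^ k) :
    (starRingEnd ℂ) (S x (yy r θ) k N) = S ((starRingEnd ℂ) x) (yy r (-θ)) k' N := by
  unfold S
  rw [map_sum]
  refine Finset.sum_congr rfl fun n _ => ?_
  rw [map_mul, map_mul, yy_pow r θ hr h1 h2, A_conj, ← Complex.exp_conj, hk]
  congr 1
  · congr 2
    simp [map_ofNat]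
  · congr 1
    simp [map_ofNat]

lemma E_conj (x : ℂ) (r θ : ℝ) (hr : 0 < r) (h1 : -π < θ) (h2 : θ < π) (k k' : ℕ)
    (hk : (-1 : ℂ) ^ k' = - (-1) ^ k) :
    (starRingEnd ℂ) (E x (yy r θ) k) = E ((starRingEnd ℂ) x) (yy r (-θ)) k' := by
  unfold E
  rw [four_pow, four_pow]
  simp only [map_mul, map_sub, map_add, yy_pow r θ hr h1 h2, ← Complex.exp_conj, hk, map_div₀, map_neg,
    Complex.conj_ofReal, map_pow, map_one, Complex.conj_I, map_ofNat]
  congr 2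
  congr 1
  congr 1
  · congr 2
    congr 1
    ring
  · congr 2
    ring

lemma om_norm (θ : ℝ) : ‖om θ‖ = 1 := by
  unfold om
  rw [show Complex.I * (π / 6 + θ / 3) = ((π / 6 + θ / 3 : ℝ) : ℂ) * Complex.I by push_cast; ring,
      Complex.norm_exp_ofReal_mul_I]

lemma om_re (θ : ℝ) : (om θ).re = Real.cos (π / 6 + θ / 3) := by
  unfold om
  rw [show Complex.I * (π / 6 + θ / 3) = ((π / 6 + θ / 3 : ℝ) : ℂ) * Complex.I by push_cast; ring,
      Complex.exp_ofReal_mul_I_re]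

lemma om_pow4_re (θ : ℝ) : (om θ ^ 4).re = Real.cos (2 * π / 3 + 4 * θ / 3) := by
  unfold om
  rw [← Complex.exp_nat_mul, show ((4 : ℕ) : ℂ) * (Complex.I * (π / 6 + θ / 3)) = ((2 * π / 3 + 4 * θ / 3 : ℝ) : ℂ) * Complex.I by push_cast; ring,
      Complex.exp_ofReal_mul_I_re]

lemma RR_pos (r : ℝ) : 0 < RR r := Real.exp_pos _

lemma RR_tendsto : Tendsto RR atTop atTop := by
  unfold RR
  apply Real.tendsto_exp_atTop.comp
  apply Tendsto.atTop_div_const (by norm_num)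
  exact tendsto_atTop_add_const_right _ _ Real.tendsto_log_atTop

lemma RR_pow (r : ℝ) (hr : 0 < r) (N : ℕ) :
    (RR r ^ 2)⁻¹ ^ (N + 1) = Real.exp (2 * (N + 1) * Real.log 4 / 3) * r ^ (-(2 * ((N : ℝ) + 1)) / 3) := by
  unfold RR
  rw [Real.rpow_def_of_pos hr, ← Real.exp_nat_mul, ← Real.exp_neg, ← Real.exp_nat_mul, ← Real.exp_add]
  congr 1
  push_cast
  ring

lemma ev_R (x : ℂ) {κ : ℝ} (hκ : 0 < κ) :
    ∀ᶠ r in atTop, 0 < r ∧ 1 ≤ RR r ∧ ‖x‖ * (RR r ^ 2)⁻¹ ≤ κ / 2 := by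
  filter_upwards [eventually_gt_atTop 0, RR_tendsto.eventually_ge_atTop 1,
    RR_tendsto.eventually_ge_atTop (2 * ‖x‖ / κ)] with r h0 h1 h2
  refine ⟨h0, h1, ?_⟩
  have : 2 * ‖x‖ ≤ RR r * κ := by rwa [div_le_iff₀ hκ] at h2
  have h3 : RR r * κ ≤ RR r ^ 2 * κ := by
    have : RR r ≤ RR r ^ 2 := by nlinarith
    gcongr
  rw [← div_eq_mul_inv, div_le_iff₀ (by positivity)]
  linarith

lemma quad_re (ω : ℂ) (hω : ‖ω‖ = 1) (s : ℝ) :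
    (6 * ω ^ 2 + 4 * (s : ℂ) * ω + (s : ℂ) ^ 2).re = (s + 2 * ω.re) ^ 2 + 8 * ω.re ^ 2 - 6 := by
  have h : ω.re ^ 2 + ω.im ^ 2 = 1 := by
    have := Complex.sq_norm ω
    rw [hω, Complex.normSq_apply] at this
    nlinarith
  simp [pow_two]
  nlinarith

lemma sq_re' (ω : ℂ) (hω : ‖ω‖ = 1) :
    6 * (ω ^ 2).re = 12 * ω.re ^ 2 - 6 := by
  have h : ω.re ^ 2 + ω.im ^ 2 = 1 := by
    have := Complex.sq_norm ω
    rw [hω, Complex.normSq_apply] at this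
    nlinarith
  simp [pow_two]
  nlinarith

lemma neg_decay (c L : ℝ) (hc : 0 < c) (n : ℕ) : ∃ C, ∀ X : ℝ, 0 < X →
    Real.exp (-c * X ^ 2 + L * X) ≤ C * X⁻¹ ^ n := by
  refine ⟨Real.exp ((L + 1) ^ 2 / (4 * c)) * n.factorial, fun X hX => ?_⟩
  rw [inv_pow, ← div_eq_mul_inv, le_div_iff₀ (by positivity)]
  have h1 : X ^ n ≤ n.factorial * Real.exp X := by
    have := abs_pow_le X n
    rwa [abs_of_pos hX] at this
  have h2 : Real.exp (-c * X ^ 2 + L * X) * Real.exp X ≤ Real.exp ((L + 1) ^ 2 / (4 * c)) := by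
    rw [← Real.exp_add]
    apply Real.exp_le_exp.mpr
    rw [le_div_iff₀ (by positivity)]
    nlinarith [sq_nonneg (2 * c * X - (L + 1))]
  calc _ ≤ Real.exp (-c * X ^ 2 + L * X) * (n.factorial * Real.exp X) := by gcongr
    _ = Real.exp (-c * X ^ 2 + L * X) * Real.exp X * n.factorial := by ring
    _ ≤ _ := by gcongr

lemma ee_ratio (x : ℂ) (θ : ℝ) (h1 : -(π / 8) ≤ θ) (h2 : θ < 0) (n : ℕ) : ∃ C, ∀ R : ℝ, 0 < R →
    ‖ee ((starRingEnd ℂ) x) (R * om (-θ))‖ ≤ C * ‖ee x (R * om θ)‖ * (R ^ 2)⁻¹ ^ n := by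
  have hpi := Real.pi_pos
  have hc : 0 < 3 * ((om θ ^ 4).re - (om (-θ) ^ 4).re) := by
    rw [om_pow4_re, om_pow4_re]
    have := Real.cos_lt_cos_of_nonneg_of_le_pi (x := 2 * π / 3 + 4 * θ / 3) (y := 2 * π / 3 + 4 * -θ / 3)
      (by linarith) (by linarith) (by linarith)
    linarith
  obtain ⟨C, hC⟩ := neg_decay _ (2 * ‖x‖) hc n
  refine ⟨C, fun R hR => ?_⟩
  have hX : 0 < R ^ 2 := by positivity
  have := hC _ hX
  unfold ee
  rw [norm_mul, norm_mul, norm_div, norm_div, norm_mul, norm_mul, om_norm, om_norm, Complex.norm_exp,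
    Complex.norm_exp]
  have key : (3 * ((R : ℂ) * om (-θ)) ^ 4 - (starRingEnd ℂ) x * (R * om (-θ)) ^ 2 + ((starRingEnd ℂ) x) ^ 2 / 6).re
     ≤ (-(3 * ((om θ ^ 4).re - (om (-θ) ^ 4).re)) * (R ^ 2) ^ 2 + 2 * ‖x‖ * R ^ 2) +
      (3 * ((R : ℂ) * om θ) ^ 4 - x * (R * om θ) ^ 2 + x ^ 2 / 6).re := by
    have e1 : ∀ φ : ℝ, (3 * ((R : ℂ) * om φ) ^ 4).re = 3 * R ^ 4 * (om φ ^ 4).re := by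
      intro φ
      rw [show 3 * ((R : ℂ) * om φ) ^ 4 = ((3 * R ^ 4 : ℝ) : ℂ) * om φ ^ 4 by push_cast; ring,
        Complex.re_ofReal_mul]
    have e2 : (((starRingEnd ℂ) x) ^ 2 / 6).re = (x ^ 2 / 6).re := by
      rw [← Complex.conj_re (x ^ 2 / 6), map_div₀, map_pow, map_ofNat]
    have e3 : ∀ (z : ℂ) (φ : ℝ), ‖z * (R * om φ) ^ 2‖ = ‖z‖ * R ^ 2 := by
      intro z φ
      rw [norm_mul, norm_pow, norm_mul, om_norm, Complex.norm_real, Real.norm_of_nonneg hR.le, mul_one]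
    have e4 := (abs_le.mp (Complex.abs_re_le_norm ((starRingEnd ℂ) x * (R * om (-θ)) ^ 2))).1
    have e5 := (abs_le.mp (Complex.abs_re_le_norm (x * (R * om θ) ^ 2))).2
    rw [e3] at e4 e5
    rw [RCLike.norm_conj] at e4
    rw [Complex.add_re, Complex.add_re, Complex.sub_re, Complex.sub_re, e1, e1, e2]
    nlinarith
  have h3 := Real.exp_le_exp.mpr key
  rw [Real.exp_add] at h3
  set W := ‖((Real.sqrt (π / 6) : ℝ) : ℂ)‖ / (‖(R : ℂ)‖ * 1)
  have hW : 0 ≤ W := by positivity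
  set V := Real.exp (3 * ((R : ℂ) * om θ) ^ 4 - x * (R * om θ) ^ 2 + x ^ 2 / 6).re
  have hV : 0 ≤ V := by positivity
  calc _ ≤ W * _ := mul_le_mul_of_nonneg_left h3 hW
    _ ≤ W * ((C * (R ^ 2)⁻¹ ^ n) * V) :=
      mul_le_mul_of_nonneg_left (mul_le_mul_of_nonneg_right this hV) hW
    _ = _ := by ring

lemma sum_bdd (x : ℂ) (N : ℕ) : ∃ C, 0 ≤ C ∧ ∀ (R θ : ℝ), 1 ≤ R →
    ‖∑ n ∈ Finset.range (N + 1), (((R : ℂ) * om θ) ^ 2)⁻¹ ^ n * BB x n‖ ≤ C := by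
  refine ⟨∑ n ∈ Finset.range (N + 1), ‖BB x n‖, by positivity, fun R θ hR => ?_⟩
  refine (norm_sum_le _ _).trans (Finset.sum_le_sum fun n _ => ?_)
  rw [norm_mul, norm_pow, norm_inv, norm_pow, norm_mul, om_norm, Complex.norm_real,
    Real.norm_of_nonneg (by linarith), mul_one]
  have : (R ^ 2)⁻¹ ^ n ≤ 1 := by
    apply pow_le_one₀ (by positivity)
    apply inv_le_one_of_one_le₀
    nlinarith
  exact mul_le_of_le_one_left (norm_nonneg _) this

def Goal (x : ℂ) (θ : ℝ) (N : ℕ) : Prop := ∃ C, ∀ᶠ r in atTop,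
  ‖P x (yy r θ) - E x (yy r θ) 1 * S x (yy r θ) 1 N - E x (yy r θ) 2 * S x (yy r θ) 2 N‖
    ≤ C * ((‖E x (yy r θ) 1‖ + ‖E x (yy r θ) 2‖) * (RR r ^ 2)⁻¹ ^ (N + 1))

lemma ES2 (x : ℂ) (r θ : ℝ) (hr : 0 < r) (h1 : -π < θ) (h2 : θ < π) (N : ℕ) :
    E x (yy r θ) 2 * S x (yy r θ) 2 N =
     (starRingEnd ℂ) (E ((starRingEnd ℂ) x) (yy r (-θ)) 1 * S ((starRingEnd ℂ) x) (yy r (-θ)) 1 N) := by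
  rw [map_mul, E_conj _ r (-θ) hr (by linarith) (by linarith) 1 2 (by norm_num),
    S_conj _ r (-θ) hr (by linarith) (by linarith) 1 2 N (by norm_num)]
  simp

lemma goal_conj (x : ℂ) (θ : ℝ) (N : ℕ) (h1 : -π < θ) (h2 : θ < π)
    (h : Goal ((starRingEnd ℂ) x) (-θ) N) : Goal x θ N := by
  obtain ⟨C, hC⟩ := h
  refine ⟨C, ?_⟩
  filter_upwards [hC, eventually_gt_atTop 0] with r h hr
  rw [← yy_conj, ← P_conj, yy_conj,
    ← E_conj x r θ hr h1 h2 2 1 (by norm_num), ← E_conj x r θ hr h1 h2 1 2 (by norm_num),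
    ← S_conj x r θ hr h1 h2 2 1 N (by norm_num), ← S_conj x r θ hr h1 h2 1 2 N (by norm_num),
    ← map_mul, ← map_mul, ← map_sub, ← map_sub, RCLike.norm_conj, RCLike.norm_conj,
    RCLike.norm_conj] at h
  rw [add_comm ‖E x (yy r θ) 1‖, sub_right_comm]
  exact h

lemma goal_neg (x : ℂ) (θ : ℝ) (N : ℕ) (h1 : -(π / 8) ≤ θ) (h2 : θ < 0) : Goal x θ N := by
  have hpi := Real.pi_pos
  have hcos : Real.cos (π / 6) < Real.cos (π / 6 + θ / 3) :=
    Real.cos_lt_cos_of_nonneg_of_le_pi (by linarith) (by linarith) (by linarith)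
  rw [Real.cos_pi_div_six, ← om_re] at hcos
  have h3 : (0 : ℝ) < √3 := by positivity
  have h33 : √3 * √3 = 3 := Real.mul_self_sqrt (by norm_num)
  have hω := om_norm θ
  have hre : 0 < (om θ).re := by linarith
  have hκ : 0 < 8 * (om θ).re ^ 2 - 6 := by nlinarith
  obtain ⟨C, hC⟩ := J_est x (om θ) _ 1 N hω hre hκ (by rw [sq_re' _ hω]; nlinarith) one_pos
  obtain ⟨C2, hC2⟩ := ee_ratio x θ h1 h2 (N + 1)
  obtain ⟨C3, hC30, hC3⟩ := sum_bdd ((starRingEnd ℂ) x) N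
  refine ⟨|C| + |C3 * C2|, ?_⟩
  filter_upwards [ev_R x hκ] with r ⟨hr, hR, hx⟩
  have key := hC (RR r) (yy r θ) Set.univ hR hx MeasurableSet.univ (Iy_eq r θ hr)
    (fun p _ => by rw [quad_re _ hω]; nlinarith [sq_nonneg (p * (RR r ^ 2)⁻¹ + 2 * (om θ).re)])
    (fun p hp => absurd (Set.mem_univ _) hp)
  rw [setIntegral_univ] at key
  have hP := P_eq x (yy r θ) (RR r * (om θ).im)
  have hES := ES1_eq x r θ N hr (by linarith) (by linarith)
  have hEn := E1_norm x r θ hr (by linarith) (by linarith)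
  have hES' := ES1_eq ((starRingEnd ℂ) x) r (-θ) N hr (by linarith) (by linarith)
  change E x (yy r θ) 1 * S x (yy r θ) 1 N = _ at hES
  change _ = 2 * ‖E x (yy r θ) 1‖ at hEn
  change E _ (yy r (-θ)) 1 * S _ (yy r (-θ)) 1 N = _ at hES'
  have hn2 : ‖E x (yy r θ) 2 * S x (yy r θ) 2 N‖ ≤ C3 * C2 * ‖E x (yy r θ) 1‖ * (RR r ^ 2)⁻¹ ^ (N + 1) := by
    rw [ES2 x r θ hr (by linarith) (by linarith), RCLike.norm_conj, hES', norm_div, norm_mul]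
    have q1 := hC2 (RR r) (RR_pos r)
    have q2 := hC3 (RR r) (-θ) hR
    have q3 := mul_le_mul q1 q2 (norm_nonneg _) ((norm_nonneg _).trans q1)
    rw [hEn] at q3
    rw [Complex.norm_ofNat, div_le_iff₀ (by norm_num)]
    linarith
  have hn1 : ‖P x (yy r θ) - E x (yy r θ) 1 * S x (yy r θ) 1 N‖ ≤ C * ‖E x (yy r θ) 1‖ * (RR r ^ 2)⁻¹ ^ (N + 1) := by
    rw [hP, hES, ← sub_div, norm_div, Complex.norm_ofNat, div_le_iff₀ (by norm_num)]
    rw [hEn] at key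
    linarith
  have hq : 0 ≤ (RR r ^ 2)⁻¹ ^ (N + 1) := by positivity
  calc _ ≤ C * ‖E x (yy r θ) 1‖ * (RR r ^ 2)⁻¹ ^ (N + 1) +
        C3 * C2 * ‖E x (yy r θ) 1‖ * (RR r ^ 2)⁻¹ ^ (N + 1) := (norm_sub_le _ _).trans (add_le_add hn1 hn2)
    _ ≤ |C| * ‖E x (yy r θ) 1‖ * (RR r ^ 2)⁻¹ ^ (N + 1) +
        |C3 * C2| * ‖E x (yy r θ) 1‖ * (RR r ^ 2)⁻¹ ^ (N + 1) := by
      gcongr <;> exact le_abs_self _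
    _ = (|C| + |C3 * C2|) * ((‖E x (yy r θ) 1‖ + 0) * (RR r ^ 2)⁻¹ ^ (N + 1)) := by ring
    _ ≤ _ := by gcongr; exact norm_nonneg _

lemma ff_conj (x y : ℂ) (u h : ℝ) : ff x y ((-u : ℝ) + h * Complex.I) =
    (starRingEnd ℂ) (ff ((starRingEnd ℂ) x) ((starRingEnd ℂ) y) (u + h * Complex.I)) := by
  unfold ff
  rw [← Complex.exp_conj]
  congr 1
  simp
  ring

lemma left_half (x y : ℂ) (h : ℝ) : ∫ u in Set.Iic (0 : ℝ), ff x y (u + h * Complex.I) =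
    (starRingEnd ℂ) (∫ u in Set.Ioi (0 : ℝ), ff ((starRingEnd ℂ) x) ((starRingEnd ℂ) y) (u + h * Complex.I)) := by
  rw [← integral_conj]
  have := integral_comp_neg_Ioi (0 : ℝ) (fun u : ℝ => ff x y (u + h * Complex.I))
  rw [neg_zero] at this
  rw [← this]
  congr 1
  ext u
  exact ff_conj x y u h

lemma goal_zero (x : ℂ) (N : ℕ) : Goal x 0 N := by
  have hpi := Real.pi_pos
  have h3 : (0 : ℝ) < √3 := by positivity
  have h33 : √3 * √3 = 3 := Real.mul_self_sqrt (by norm_num)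
  have hω := om_norm 0
  have hr0 : (om 0).re = √3 / 2 := by rw [om_re, zero_div, add_zero, Real.cos_pi_div_six]
  have hre : 0 < (om 0).re := by rw [hr0]; positivity
  have est : ∀ z : ℂ, ‖z‖ = ‖x‖ → ∃ C, ∀ᶠ r in atTop,
      ‖(∫ u in Set.Ioi (0 : ℝ), ff z (yy r 0) (u + (RR r * (om 0).im : ℝ) * Complex.I)) / 2 -
      E z (yy r 0) 1 * S z (yy r 0) 1 N‖ ≤ C * ‖E z (yy r 0) 1‖ * (RR r ^ 2)⁻¹ ^ (N + 1) := by
    intro z hz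
    obtain ⟨C, hC⟩ := J_est z (om 0) (3 / 4) (√3 / 2) N hω hre (by norm_num)
      (by rw [sq_re' _ hω, hr0]; nlinarith) (by positivity)
    refine ⟨C, ?_⟩
    filter_upwards [ev_R z (κ := 3 / 4) (by norm_num)] with r ⟨hr, hR, hx⟩
    have hRp := RR_pos r
    have hs : ∀ p : ℝ, RR r * (om 0).re + p / RR r = RR r * (√3 / 2 + p * (RR r ^ 2)⁻¹) := by
      intro p
      rw [hr0]
      field_simp
    have key := hC (RR r) (yy r 0) (Set.Ioi 0) hR hx measurableSet_Ioi (Iy_eq r 0 hr)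
      (fun p hp => by
        rw [hs, Set.mem_Ioi, mul_pos_iff_of_pos_left hRp] at hp
        rw [quad_re _ hω, hr0]
        nlinarith)
      (fun p hp => by
        rw [hs, Set.mem_Ioi, mul_pos_iff_of_pos_left hRp, not_lt] at hp
        have h4 : 0 ≤ (RR r ^ 2)⁻¹ := by positivity
        have : -p * (RR r ^ 2)⁻¹ ≤ |p| * (RR r ^ 2)⁻¹ := by
          gcongr; exact neg_le_abs p
        linarith)
    have hES := ES1_eq z r 0 N hr (by linarith) (by linarith)
    have hEn := E1_norm z r 0 hr (by linarith) (by linarith)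
    change E z (yy r 0) 1 * S z (yy r 0) 1 N = _ at hES
    change _ = 2 * ‖E z (yy r 0) 1‖ at hEn
    rw [hES, ← sub_div, norm_div, Complex.norm_ofNat, div_le_iff₀ (by norm_num)]
    rw [hEn] at key
    linarith
  obtain ⟨C1, hC1⟩ := est x rfl
  obtain ⟨C2, hC2⟩ := est ((starRingEnd ℂ) x) (RCLike.norm_conj _)
  refine ⟨|C1| + |C2|, ?_⟩
  filter_upwards [hC1, hC2, eventually_gt_atTop 0] with r k1 k2 hr
  have hP := P_eq x (yy r 0) (RR r * (om 0).im)
  have hint := ff_int x (yy r 0) (RR r * (om 0).im)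
  have hsplit := intervalIntegral.integral_Iic_add_Ioi (b := (0 : ℝ)) hint.integrableOn hint.integrableOn
  have hy : (starRingEnd ℂ) (yy r 0) = yy r 0 := by rw [yy_conj, neg_zero]
  rw [left_half, hy] at hsplit
  have hE2 := E_conj x r 0 hr (by linarith) (by linarith) 2 1 (by norm_num)
  have hES2 := ES2 x r 0 hr (by linarith) (by linarith) N
  rw [neg_zero] at hE2 hES2
  rw [← hE2, RCLike.norm_conj] at k2
  rw [← hsplit] at hP
  rw [hP, hES2]
  have hq : 0 ≤ (RR r ^ 2)⁻¹ ^ (N + 1) := by positivity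
  set I1 := ∫ u in Set.Ioi (0 : ℝ), ff x (yy r 0) (u + (RR r * (om 0).im : ℝ) * Complex.I)
  set I2 := ∫ u in Set.Ioi (0 : ℝ), ff ((starRingEnd ℂ) x) (yy r 0) (u + (RR r * (om 0).im : ℝ) * Complex.I)
  rw [← RCLike.norm_conj, map_sub, map_div₀, map_ofNat] at k2
  have e : ((starRingEnd ℂ) I2 + I1) / 2 - E x (yy r 0) 1 * S x (yy r 0) 1 N -
      (starRingEnd ℂ) (E ((starRingEnd ℂ) x) (yy r 0) 1 * S ((starRingEnd ℂ) x) (yy r 0) 1 N)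
    = (I1 / 2 - E x (yy r 0) 1 * S x (yy r 0) 1 N) + ((starRingEnd ℂ) I2 / 2 -
      (starRingEnd ℂ) (E ((starRingEnd ℂ) x) (yy r 0) 1 * S ((starRingEnd ℂ) x) (yy r 0) 1 N)) := by ring
  rw [e]
  calc _ ≤ C1 * ‖E x (yy r 0) 1‖ * (RR r ^ 2)⁻¹ ^ (N + 1) + C2 * ‖E x (yy r 0) 2‖ * (RR r ^ 2)⁻¹ ^ (N + 1) :=
        (norm_add_le _ _).trans (add_le_add k1 (by rw [← hE2]; exact k2))
    _ ≤ (|C1| + |C2|) * ‖E x (yy r 0) 1‖ * (RR r ^ 2)⁻¹ ^ (N + 1) +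
       (|C1| + |C2|) * ‖E x (yy r 0) 2‖ * (RR r ^ 2)⁻¹ ^ (N + 1) := by
      gcongr
      · linarith [le_abs_self C1, abs_nonneg C2]
      · linarith [le_abs_self C2, abs_nonneg C1]
    _ = _ := by ring

lemma goal_all (x : ℂ) (θ : ℝ) (N : ℕ) (hθ : θ ∈ Set.Icc (-(π / 8)) (π / 8)) : Goal x θ N := by
  have hpi := Real.pi_pos
  obtain ⟨h1, h2⟩ := hθ
  rcases lt_trichotomy θ 0 with h | h | h
  · exact goal_neg x θ N h1 h
  · rw [h]; exact goal_zero x N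
  · exact goal_conj x θ N (by linarith) (by linarith) (goal_neg _ _ N (by linarith) (by linarith))

/-- Complete asymptotic expansion of `P(x,y)` for large `|y|` in the sector
`|arg y| ≤ π/8` (case 3): both saddle points contribute. -/
theorem pearcey_asymptotic_case3 (x : ℂ) (θ : ℝ)
    (hθ : θ ∈ Set.Icc (-(π / 8)) (π / 8)) (N : ℕ) :
    (fun r : ℝ =>
        P x ((r : ℂ) * Complex.exp (Complex.I * (θ : ℂ)))
          - E x ((r : ℂ) * Complex.exp (Complex.I * (θ : ℂ))) 1 *
              S x ((r : ℂ) * Complex.exp (Complex.I * (θ : ℂ))) 1 N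
          - E x ((r : ℂ) * Complex.exp (Complex.I * (θ : ℂ))) 2 *
              S x ((r : ℂ) * Complex.exp (Complex.I * (θ : ℂ))) 2 N)
      =O[atTop] fun r : ℝ =>
        (‖E x ((r : ℂ) * Complex.exp (Complex.I * (θ : ℂ))) 1‖ +
            ‖E x ((r : ℂ) * Complex.exp (Complex.I * (θ : ℂ))) 2‖) *
          r ^ (-(2 * ((N : ℝ) + 1)) / 3) := by
  obtain ⟨C, hC⟩ := goal_all x θ N hθ
  apply IsBigO.of_bound (C * Real.exp (2 * (N + 1) * Real.log 4 / 3))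
  filter_upwards [hC, eventually_gt_atTop 0] with r h hr
  rw [RR_pow r hr] at h
  unfold yy at h
  have hq : 0 ≤ r ^ (-(2 * ((N : ℝ) + 1)) / 3) := by positivity
  rw [Real.norm_of_nonneg (by positivity)]
  refine h.trans (le_of_eq ?_)
  ring
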